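/- arXiv:1605.04323 — 2 statements merged into one kernel-verified Lean document; each statement's English description precedes it below -/
import Mathlib

section
/- There is an absolute constant C₂ > 0 such that for every integer d ≥ 2 and every ψ with 0 < ψ < arccos(d^{−1/2}), the unit sphere S^{d−1} ⊆ ℝ^d can be covered by at most C₂·(cos ψ / sin^{d−1} ψ)·(d−1)^{3/2}·ln(1 + (d−1)cos²ψ) spherical balls of geodesic radius ψ; moreover this bound is at most C₂·(√d/ψ)^{d−1}·(d−1)^{3/2}·ln(d). -/
open RealInnerProductSpace

/-!
The standard Gaussian measure is rotation invariant, and integrating the tail along the axis over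
the orthogonal hyperplane shows that in dimension `n + 1` a circular cone of half-angle `φ` has
measure at least a constant multiple of `sin ^ n φ / (1 + √n cos φ)`. Hence a maximal `ε`-separated
set of unit vectors is a finite `ε`-net, and, by averaging, some cone of half-angle `ψ - ε` contains
the proportion `q ≈ sin ^ n ψ / (√n cos ψ)` of any finite set of unit vectors. Choosing directions
greedily, about `n log (1 + n) / q` of them capture all but few points of an `ε`-net with
`ε = sin ψ / (4 n)`; together with the points missed they form a cover by balls of radius `ψ`. This
proves the bound with `log (1 + n)` in place of `log (1 + n cos ^ 2 ψ)`, the two being comparable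
unless `cos ψ` is small.

If `cos ψ` is small, split the coordinates into `k` blocks. Every unit vector has at least `1 / k`
of its squared norm in some block, so covering the unit sphere of each block with radius
`arccos (√k cos ψ)` covers the whole sphere with radius `ψ`. For `k ≈ 1 / (4 n cos ^ 4 ψ)` this
loses only a constant factor, while the block dimension drops to the order of `(n cos ^ 2 ψ) ^ 2`,
which turns the logarithm into `log (1 + n cos ^ 2 ψ)`.
-/

open MeasureTheory ProbabilityTheory InnerProductGeometry

section GaussianTail

lemma exp_div_thirty_le_gaussianPDFReal {x y : ℝ} (h : y ^ 2 ≤ x ^ 2 + 3) :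
    Real.exp (-x ^ 2 / 2) / 30 ≤ gaussianPDFReal 0 1 y := by
  have exp_ge : (1 / 10 : ℝ) ≤ Real.exp (-2) := by
    have exp_two_le : Real.exp 2 ≤ 3 ^ 2 := by
      rw [show (2 : ℝ) = 2 * 1 by norm_num, ← Nat.cast_two (R := ℝ), Real.exp_nat_mul]
      gcongr
      exact Real.exp_one_lt_three.le
    rw [Real.exp_neg, ← one_div]
    gcongr
    linarith
  have sqrt_le : √(2 * Real.pi) ≤ 3 := by
    rw [Real.sqrt_le_left (by norm_num)]
    linarith [Real.pi_lt_d2]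
  calc Real.exp (-x ^ 2 / 2) / 30 = 3⁻¹ * (1 / 10 * Real.exp (-x ^ 2 / 2)) := by ring
    _ ≤ (√(2 * Real.pi))⁻¹ * (Real.exp (-2) * Real.exp (-x ^ 2 / 2)) := by gcongr
    _ ≤ (√(2 * Real.pi))⁻¹ * Real.exp (-y ^ 2 / 2) := by
      rw [← Real.exp_add]
      gcongr
      linarith
    _ = gaussianPDFReal 0 1 y := by simp [gaussianPDFReal]

lemma exp_div_le_gaussianReal_Ioi {x : ℝ} (hx : 0 ≤ x) :
    Real.exp (-x ^ 2 / 2) / (30 * (1 + x)) ≤ (gaussianReal 0 1).real (Set.Ioi x) := by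
  set δ := 1 / (1 + x) with hδ
  have δ_pos : 0 < δ := by positivity
  have δ_le : δ ≤ 1 := by rw [hδ, div_le_one (by positivity)]; linarith
  have mul_δ_le : x * δ ≤ 1 := by rw [hδ, mul_one_div, div_le_one (by positivity)]; linarith
  calc Real.exp (-x ^ 2 / 2) / (30 * (1 + x))
      = ∫ _ in Set.Ioc x (x + δ), Real.exp (-x ^ 2 / 2) / 30 := by
        rw [setIntegral_const, Real.volume_real_Ioc_of_le (by linarith), hδ, smul_eq_mul]
        field_simp
        ring
    _ ≤ ∫ y in Set.Ioc x (x + δ), gaussianPDFReal 0 1 y := by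
        refine setIntegral_mono_on (integrableOn_const (by simp))
          (integrable_gaussianPDFReal 0 1).integrableOn measurableSet_Ioc fun y hy ↦ ?_
        apply exp_div_thirty_le_gaussianPDFReal
        nlinarith [hy.1, hy.2]
    _ = (gaussianReal 0 1).real (Set.Ioc x (x + δ)) := by
        rw [measureReal_def, gaussianReal_apply_eq_integral _ one_ne_zero, ENNReal.toReal_ofReal]
        exact setIntegral_nonneg measurableSet_Ioc fun y _ ↦ gaussianPDFReal_nonneg 0 1 y
    _ ≤ (gaussianReal 0 1).real (Set.Ioi x) := measureReal_mono Set.Ioc_subset_Ioi_self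

lemma one_add_mul_le_one_add_mul_exp {m : ℝ} (hm : 0 ≤ m) (r : ℝ) :
    1 + r * m ≤ (1 + m) * Real.exp (r ^ 2 / 2) := by
  have r_le : r ≤ Real.exp (r ^ 2 / 2) := by
    nlinarith [Real.add_one_le_exp (r ^ 2 / 2), sq_nonneg (r - 1)]
  have one_le : 1 ≤ Real.exp (r ^ 2 / 2) := Real.one_le_exp (by positivity)
  nlinarith [mul_le_mul_of_nonneg_right r_le hm]

-- Replacing `1 / (1 + x)` by a Gaussian factor makes the bound integrable in closed form.
lemma exp_sq_div_le_gaussianReal_Ioi {x m : ℝ} (hx : 0 ≤ x) (hm : 0 < m) :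
    Real.exp (-((1 + 1 / m ^ 2) / 2 * x ^ 2)) / (30 * (1 + m)) ≤
      (gaussianReal 0 1).real (Set.Ioi x) := by
  have key := one_add_mul_le_one_add_mul_exp hm.le (x / m)
  rw [div_mul_cancel₀ x hm.ne'] at key
  calc Real.exp (-((1 + 1 / m ^ 2) / 2 * x ^ 2)) / (30 * (1 + m))
      = Real.exp (-x ^ 2 / 2) / (30 * ((1 + m) * Real.exp ((x / m) ^ 2 / 2))) := by
        rw [show -((1 + 1 / m ^ 2) / 2 * x ^ 2) = -x ^ 2 / 2 - (x / m) ^ 2 / 2 by ring,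
          Real.exp_sub]
        field_simp
    _ ≤ Real.exp (-x ^ 2 / 2) / (30 * (1 + x)) := by gcongr
    _ ≤ (gaussianReal 0 1).real (Set.Ioi x) := exp_div_le_gaussianReal_Ioi hx

end GaussianTail

section GaussianIntegral

lemma integrable_exp_neg_mul_sq_gaussianReal {κ : ℝ} (hκ : 0 ≤ κ) :
    Integrable (fun z : ℝ ↦ Real.exp (-κ * z ^ 2)) (gaussianReal 0 1) := by
  refine Integrable.of_bound (C := 1) (by fun_prop) (.of_forall fun z ↦ ?_)
  rw [Real.norm_of_nonneg (Real.exp_pos _).le, Real.exp_le_one_iff]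
  nlinarith [sq_nonneg z]

lemma integral_exp_neg_mul_sq_gaussianReal {κ : ℝ} (hκ : 0 ≤ κ) :
    ∫ z, Real.exp (-κ * z ^ 2) ∂(gaussianReal 0 1) = (√(1 + 2 * κ))⁻¹ := by
  have density_mul (z : ℝ) : gaussianPDFReal 0 1 z * Real.exp (-κ * z ^ 2) =
      (√(2 * Real.pi))⁻¹ * Real.exp (-(κ + 1 / 2) * z ^ 2) := by
    simp only [gaussianPDFReal, NNReal.coe_one, mul_one, sub_zero]
    rw [mul_assoc, ← Real.exp_add]
    ring_nf
  simp only [integral_gaussianReal_eq_integral_smul one_ne_zero, smul_eq_mul, density_mul]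
  rw [integral_const_mul, integral_gaussian, ← Real.sqrt_inv, ← Real.sqrt_mul (by positivity),
    ← Real.sqrt_inv]
  congr 1
  field_simp
  ring

variable {ι : Type*} [Fintype ι]

lemma integrable_exp_neg_mul_sum_sq_pi_gaussianReal {κ : ℝ} (hκ : 0 ≤ κ) :
    Integrable (fun z : ι → ℝ ↦ Real.exp (-κ * ∑ i, z i ^ 2))
      (Measure.pi fun _ ↦ gaussianReal 0 1) := by
  simp only [Finset.mul_sum, Real.exp_sum]
  exact Integrable.fintype_prod fun _ ↦ integrable_exp_neg_mul_sq_gaussianReal hκ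

lemma integral_exp_neg_mul_sum_sq_pi_gaussianReal {κ : ℝ} (hκ : 0 ≤ κ) :
    ∫ z : ι → ℝ, Real.exp (-κ * ∑ i, z i ^ 2) ∂(Measure.pi fun _ ↦ gaussianReal 0 1) =
      (√(1 + 2 * κ))⁻¹ ^ Fintype.card ι := by
  simp only [Finset.mul_sum, Real.exp_sum]
  rw [integral_fintype_prod_eq_pow fun z ↦ Real.exp (-κ * z ^ 2),
    integral_exp_neg_mul_sq_gaussianReal hκ]

end GaussianIntegral

lemma integral_le_measureReal_prod {α β : Type*} [MeasurableSpace α] [MeasurableSpace β]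
    {μ : Measure α} {ν : Measure β} [IsFiniteMeasure μ] [IsFiniteMeasure ν] {s : Set (α × β)}
    (hs : MeasurableSet s) {f : β → ℝ} (hf : Integrable f ν)
    (h : ∀ z, f z ≤ μ.real ((fun x ↦ (x, z)) ⁻¹' s)) :
    ∫ z, f z ∂ν ≤ (μ.prod ν).real s := by
  have slice_measurable : Measurable fun z ↦ μ ((fun x ↦ (x, z)) ⁻¹' s) :=
    measurable_measure_prodMk_right hs
  rw [measureReal_def, Measure.prod_apply_symm hs,
    ← integral_toReal slice_measurable.aemeasurable (.of_forall fun _ ↦ measure_lt_top _ _)]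
  refine integral_mono hf ?_ h
  refine Integrable.of_bound (C := μ.real Set.univ)
    slice_measurable.ennreal_toReal.aestronglyMeasurable (.of_forall fun z ↦ ?_)
  rw [Real.norm_of_nonneg ENNReal.toReal_nonneg]
  exact measureReal_mono (Set.subset_univ _)

section Cone

lemma cos_mul_sqrt_add_lt {φ R y : ℝ} (hφ0 : 0 < φ) (hφ : φ < Real.pi / 2) (hR : 0 ≤ R)
    (hy : Real.cos φ / Real.sin φ * √R < y) : Real.cos φ * √(y ^ 2 + R) < y := by
  have sin_pos := Real.sin_pos_of_pos_of_lt_pi hφ0 (by linarith)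
  have cos_pos := Real.cos_pos_of_mem_Ioo ⟨by linarith, hφ⟩
  have y_pos : 0 < y := lt_of_le_of_lt (by positivity) hy
  have sq_lt : Real.cos φ ^ 2 * R < Real.sin φ ^ 2 * y ^ 2 := by
    rw [div_mul_eq_mul_div, div_lt_iff₀ sin_pos] at hy
    have := pow_lt_pow_left₀ hy (by positivity) two_ne_zero
    rwa [mul_pow, Real.sq_sqrt hR, mul_pow, mul_comm (y ^ 2)] at this
  apply lt_of_pow_lt_pow_left₀ 2 y_pos.le
  rw [mul_pow, Real.sq_sqrt (by positivity)]
  rw [Real.sin_sq] at sq_lt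
  linarith

lemma one_add_one_div_pow_le_three (n : ℕ) : (1 + 1 / (n : ℝ)) ^ n ≤ 3 := by
  obtain rfl | hn := n.eq_zero_or_pos
  · norm_num
  calc (1 + 1 / (n : ℝ)) ^ n ≤ Real.exp (1 / n) ^ n := by
        gcongr
        linarith [Real.add_one_le_exp (1 / (n : ℝ))]
    _ = Real.exp 1 := by rw [← Real.exp_nat_mul]; field_simp
    _ ≤ 3 := Real.exp_one_lt_three.le

lemma inv_sqrt_pow_div_le_prod_gaussianReal {ι : Type*} [Fintype ι] {φ m : ℝ} (hφ0 : 0 < φ)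
    (hφ : φ < Real.pi / 2) (hm : 0 < m) :
    (√(1 + (1 + 1 / m ^ 2) * (Real.cos φ / Real.sin φ) ^ 2))⁻¹ ^ Fintype.card ι /
        (30 * (1 + m)) ≤
      ((gaussianReal 0 1).prod (Measure.pi fun _ : ι ↦ gaussianReal 0 1)).real
        {p | Real.cos φ * √(p.1 ^ 2 + ∑ i, p.2 i ^ 2) < p.1} := by
  have sin_pos := Real.sin_pos_of_pos_of_lt_pi hφ0 (by linarith)
  have cos_pos := Real.cos_pos_of_mem_Ioo ⟨by linarith, hφ⟩
  set κ := (1 + 1 / m ^ 2) / 2 * (Real.cos φ / Real.sin φ) ^ 2 with hκ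
  have κ_nonneg : 0 ≤ κ := by positivity
  calc (√(1 + (1 + 1 / m ^ 2) * (Real.cos φ / Real.sin φ) ^ 2))⁻¹ ^ Fintype.card ι /
        (30 * (1 + m))
      = ∫ z : ι → ℝ, Real.exp (-κ * ∑ i, z i ^ 2) / (30 * (1 + m))
          ∂(Measure.pi fun _ ↦ gaussianReal 0 1) := by
        rw [integral_div, integral_exp_neg_mul_sum_sq_pi_gaussianReal κ_nonneg, hκ]
        ring_nf
    _ ≤ _ := by
        refine integral_le_measureReal_prod (measurableSet_lt (by fun_prop) (by fun_prop))
          ((integrable_exp_neg_mul_sum_sq_pi_gaussianReal κ_nonneg).div_const _) fun z ↦ ?_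
        have sum_nonneg : 0 ≤ ∑ i, z i ^ 2 := Finset.sum_nonneg fun i _ ↦ sq_nonneg _
        have tail := exp_sq_div_le_gaussianReal_Ioi
          (x := Real.cos φ / Real.sin φ * √(∑ i, z i ^ 2)) (by positivity) hm
        rw [mul_pow, Real.sq_sqrt sum_nonneg, ← mul_assoc, ← hκ, ← neg_mul] at tail
        exact tail.trans (measureReal_mono fun y hy ↦ cos_mul_sqrt_add_lt hφ0 hφ sum_nonneg hy)

lemma sin_pow_div_le_prod_gaussianReal {n : ℕ} (hn : n ≠ 0) {φ : ℝ} (hφ0 : 0 < φ)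
    (hφ : φ < Real.pi / 2) :
    Real.sin φ ^ n / (90 * (1 + √n * Real.cos φ)) ≤
      ((gaussianReal 0 1).prod (Measure.pi fun _ : Fin n ↦ gaussianReal 0 1)).real
        {p | Real.cos φ * √(p.1 ^ 2 + ∑ i, p.2 i ^ 2) < p.1} := by
  have sin_pos := Real.sin_pos_of_pos_of_lt_pi hφ0 (by linarith)
  have cos_pos := Real.cos_pos_of_mem_Ioo ⟨by linarith, hφ⟩
  -- The tail parameter `√n * cos φ` brings the base within a factor `1 + 1 / n` of `sin φ`.
  have radicand_eq : 1 + (1 + 1 / (√n * Real.cos φ) ^ 2) * (Real.cos φ / Real.sin φ) ^ 2 =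
      (1 + 1 / n) / Real.sin φ ^ 2 := by
    rw [mul_pow, Real.sq_sqrt (by positivity)]
    field_simp
    linear_combination n * Real.sin_sq_add_cos_sq φ
  have sin_div_le : Real.sin φ / (1 + 1 / n) ≤
      (√(1 + (1 + 1 / (√n * Real.cos φ) ^ 2) * (Real.cos φ / Real.sin φ) ^ 2))⁻¹ := by
    rw [radicand_eq, Real.sqrt_div (by positivity), Real.sqrt_sq sin_pos.le, inv_div]
    gcongr
    rw [Real.sqrt_le_left (by positivity)]
    nlinarith [show 0 < 1 / (n : ℝ) by positivity]
  calc Real.sin φ ^ n / (90 * (1 + √n * Real.cos φ))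
      = Real.sin φ ^ n / 3 / (30 * (1 + √n * Real.cos φ)) := by field_simp; norm_num
    _ ≤ Real.sin φ ^ n / (1 + 1 / n) ^ n / (30 * (1 + √n * Real.cos φ)) := by
        gcongr
        exact one_add_one_div_pow_le_three n
    _ ≤ (√(1 + (1 + 1 / (√n * Real.cos φ) ^ 2) * (Real.cos φ / Real.sin φ) ^ 2))⁻¹ ^ n /
          (30 * (1 + √n * Real.cos φ)) := by rw [← div_pow]; gcongr
    _ ≤ _ := by
        simpa only [Fintype.card_fin] using inv_sqrt_pow_div_le_prod_gaussianReal (ι := Fin n)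
          hφ0 hφ (m := √n * Real.cos φ) (by positivity)

end Cone

section SphereCover

variable {E : Type*} [NormedAddCommGroup E] [InnerProductSpace ℝ E]

/-- The open circular cone with axis `v` and half-angle `φ`. For unit `v` its trace on the unit
sphere is an open spherical ball of geodesic radius `φ`; it omits the origin as long as
`φ ≤ π / 2`, since `angle v 0 = π / 2`. -/
def openCone (v : E) (φ : ℝ) : Set E := {x | angle v x < φ}

/-- The finite set `T` consists of unit vectors whose closed spherical balls of geodesic radius `ψ`
cover the unit sphere of `E`. -/
def IsSphereCover (T : Finset E) (ψ : ℝ) : Prop :=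
  (∀ θ ∈ T, ‖θ‖ = 1) ∧ ∀ v : E, ‖v‖ = 1 → ∃ θ ∈ T, angle v θ ≤ ψ

lemma mem_openCone_iff {v x : E} (hv : ‖v‖ = 1) {φ : ℝ} (hφ0 : 0 ≤ φ) (hφ : φ ≤ Real.pi / 2) :
    x ∈ openCone v φ ↔ Real.cos φ * ‖x‖ < ⟪v, x⟫ := by
  obtain rfl | hx := eq_or_ne x 0
  · simp [openCone, hφ]
  rw [openCone, Set.mem_ofPred_eq, ← Real.strictAntiOn_cos.lt_iff_gt
    ⟨hφ0, by linarith [Real.pi_pos]⟩ ⟨angle_nonneg v x, angle_le_pi v x⟩, cos_angle, hv, one_mul,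
    lt_div_iff₀ (norm_pos_iff.2 hx)]

lemma measurableSet_openCone [MeasurableSpace E] [BorelSpace E] [SecondCountableTopology E]
    (v : E) (φ : ℝ) : MeasurableSet (openCone v φ) := by
  refine measurableSet_lt ?_ measurable_const
  unfold InnerProductGeometry.angle
  fun_prop

end SphereCover

section ConeMeasure

lemma measureReal_stdGaussian_openCone_eq {E : Type*} [NormedAddCommGroup E]
    [InnerProductSpace ℝ E] [FiniteDimensional ℝ E] [MeasurableSpace E] [BorelSpace E] {v w : E}
    (h : ‖v‖ = ‖w‖) (φ : ℝ) :
    (stdGaussian E).real (openCone v φ) = (stdGaussian E).real (openCone w φ) := by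
  let f := (ℝ ∙ (v - w))ᗮ.reflection
  have f_v : f v = w := Submodule.reflection_sub h
  rw [← stdGaussian_map f, map_measureReal_apply (by fun_prop) (measurableSet_openCone w φ),
    stdGaussian_map f]
  congr 1
  ext x
  simp only [openCone, Set.mem_preimage, Set.mem_ofPred_eq]
  conv_rhs => rw [← f_v]
  exact iff_of_eq (congrArg (· < φ) (f.toLinearIsometry.angle_map v x).symm)

lemma sin_pow_div_le_measureReal_openCone {n : ℕ} (hn : n ≠ 0) {φ : ℝ} (hφ0 : 0 < φ)
    (hφ : φ < Real.pi / 2) {v : EuclideanSpace ℝ (Fin (n + 1))} (hv : ‖v‖ = 1) :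
    Real.sin φ ^ n / (90 * (1 + √n * Real.cos φ)) ≤
      (stdGaussian (EuclideanSpace ℝ (Fin (n + 1)))).real (openCone v φ) := by
  let e : EuclideanSpace ℝ (Fin (n + 1)) := EuclideanSpace.single 0 1
  have norm_e : ‖e‖ = 1 := by simp [e]
  refine (sin_pow_div_le_prod_gaussianReal hn hφ0 hφ).trans_eq ?_
  have mp := measurePreserving_piFinSuccAbove (fun _ : Fin (n + 1) ↦ gaussianReal 0 1) 0
  rw [measureReal_stdGaussian_openCone_eq (hv.trans norm_e.symm), ← map_pi_eq_stdGaussian,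
    map_measureReal_apply (by fun_prop) (measurableSet_openCone e φ), measureReal_def,
    ← mp.measure_preimage
      (measurableSet_lt (by fun_prop) (by fun_prop) : MeasurableSet _).nullMeasurableSet]
  congr 2
  ext x
  rw [Set.mem_preimage, Set.mem_preimage, mem_openCone_iff norm_e hφ0.le hφ.le]
  simp [e, EuclideanSpace.norm_eq, Fin.sum_univ_succ, MeasurableEquiv.piFinSuccAbove, Fin.tail,
    EuclideanSpace.inner_single_left]

end ConeMeasure

section Packing

variable {E : Type*} [NormedAddCommGroup E] [InnerProductSpace ℝ E] {ε : ℝ}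

/-- The finite set `V` consists of unit vectors at pairwise angles greater than `ε`, so that
the cones of half-angle `ε / 2` around them are disjoint; a largest such `V` is an `ε`-net. -/
def IsSpherePacking (V : Finset E) (ε : ℝ) : Prop :=
  (∀ v ∈ V, ‖v‖ = 1) ∧ (V : Set E).Pairwise fun v w ↦ ε < angle v w

lemma disjoint_openCone_half {v w : E} (h : ε < angle v w) :
    Disjoint (openCone v (ε / 2)) (openCone w (ε / 2)) := by
  refine Set.disjoint_left.2 fun x (hv : angle v x < ε / 2) (hw : angle w x < ε / 2) ↦ ?_
  have triangle := angle_le_angle_add_angle v x w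
  rw [angle_comm x w] at triangle
  linarith

lemma IsSpherePacking.card_mul_le [MeasurableSpace E] [BorelSpace E] [SecondCountableTopology E]
    {μ : Measure E} [IsProbabilityMeasure μ] {V : Finset E} (hV : IsSpherePacking V ε) {p : ℝ}
    (hp : ∀ v : E, ‖v‖ = 1 → p ≤ μ.real (openCone v (ε / 2))) : V.card * p ≤ 1 :=
  calc V.card * p = ∑ _ ∈ V, p := by rw [Finset.sum_const, nsmul_eq_mul]
    _ ≤ ∑ v ∈ V, μ.real (openCone v (ε / 2)) := Finset.sum_le_sum fun v hv ↦ hp v (hV.1 v hv)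
    _ = μ.real (⋃ v ∈ V, openCone v (ε / 2)) :=
      (measureReal_biUnion_finset (fun _ hv _ hw hne ↦ disjoint_openCone_half (hV.2 hv hw hne))
        fun v _ ↦ measurableSet_openCone v _).symm
    _ ≤ 1 := measureReal_le_one

lemma IsSpherePacking.isSphereCover (hε : 0 ≤ ε) {V : Finset E} (hV : IsSpherePacking V ε)
    (maximal : ∀ W : Finset E, IsSpherePacking W ε → W.card ≤ V.card) : IsSphereCover V ε := by
  classical
  refine ⟨hV.1, fun v hv ↦ ?_⟩
  by_contra! far
  have v_notMem : v ∉ V := fun h ↦ by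
    have := far v h
    rw [angle_self (norm_ne_zero_iff.1 (by rw [hv]; exact one_ne_zero))] at this
    linarith
  have insert_packing : IsSpherePacking (insert v V) ε := by
    refine ⟨by simpa [hv] using hV.1, ?_⟩
    rw [Finset.coe_insert, Set.pairwise_insert]
    exact ⟨hV.2, fun w hw _ ↦ ⟨far w hw, angle_comm v w ▸ far w hw⟩⟩
  have := maximal _ insert_packing
  rw [Finset.card_insert_of_notMem v_notMem] at this
  omega

lemma exists_isSphereCover_card_le_inv [MeasurableSpace E] [BorelSpace E]
    [SecondCountableTopology E] (μ : Measure E) [IsProbabilityMeasure μ] (hε : 0 ≤ ε) {p : ℝ}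
    (p_pos : 0 < p) (hp : ∀ v : E, ‖v‖ = 1 → p ≤ μ.real (openCone v (ε / 2))) :
    ∃ V : Finset E, IsSphereCover V ε ∧ (V.card : ℝ) ≤ p⁻¹ := by
  have card_le {V : Finset E} (hV : IsSpherePacking V ε) : (V.card : ℝ) ≤ p⁻¹ := by
    rw [← one_div, le_div_iff₀ p_pos]
    exact hV.card_mul_le hp
  let cards := {k : ℕ | ∃ V : Finset E, IsSpherePacking V ε ∧ V.card = k}
  have bdd : BddAbove cards := by
    refine ⟨⌊p⁻¹⌋₊, ?_⟩
    rintro _ ⟨V, hV, rfl⟩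
    exact Nat.le_floor (card_le hV)
  obtain ⟨V, hV, V_card⟩ := Nat.sSup_mem (s := cards) ⟨0, ∅, by simp [IsSpherePacking], rfl⟩ bdd
  refine ⟨V, hV.isSphereCover hε fun W hW ↦ ?_, card_le hV⟩
  rw [V_card]
  exact le_csSup bdd ⟨W, hW, rfl⟩

end Packing

section Greedy

variable {Ω ι : Type*} [MeasurableSpace Ω] {μ : Measure Ω} [IsProbabilityMeasure μ]
  {B : ι → Set Ω} {q : ℝ}

lemma exists_mul_card_le_card_filter_mem {V : Finset ι}
    [∀ ω, DecidablePred fun i ↦ ω ∈ B i] (hB : ∀ i, MeasurableSet (B i))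
    (hq : ∀ i ∈ V, q ≤ μ.real (B i)) : ∃ ω, q * V.card ≤ (V.filter fun i ↦ ω ∈ B i).card := by
  have integrable (i : ι) : Integrable ((B i).indicator (1 : Ω → ℝ)) μ :=
    (integrable_const 1).indicator (hB i)
  obtain ⟨ω, hω⟩ := exists_integral_le (integrable_finsetSum V fun i _ ↦ integrable i)
  refine ⟨ω, ?_⟩
  calc q * V.card = ∑ _ ∈ V, q := by rw [Finset.sum_const, nsmul_eq_mul, mul_comm]
    _ ≤ ∑ i ∈ V, μ.real (B i) := Finset.sum_le_sum hq
    _ = ∫ ω, ∑ i ∈ V, (B i).indicator 1 ω ∂μ := by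
      rw [integral_finsetSum V fun i _ ↦ integrable i]
      exact Finset.sum_congr rfl fun i _ ↦ (integral_indicator_one (hB i)).symm
    _ ≤ ∑ i ∈ V, (B i).indicator 1 ω := hω
    _ = (V.filter fun i ↦ ω ∈ B i).card := by simp [Set.indicator_apply]

open Classical in
lemma exists_finset_card_filter_notMem_le (hB : ∀ i, MeasurableSet (B i)) (q_le : q ≤ 1)
    {V : Finset ι} (hq : ∀ i ∈ V, q ≤ μ.real (B i)) (N : ℕ) :
    ∃ A : Finset Ω, A.card ≤ N ∧
      ((V.filter fun i ↦ ∀ ω ∈ A, ω ∉ B i).card : ℝ) ≤ (1 - q) ^ N * V.card := by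
  induction N with
  | zero => exact ⟨∅, by simp⟩
  | succ N ih =>
    obtain ⟨A, A_card, hA⟩ := ih
    set U := V.filter fun i ↦ ∀ ω ∈ A, ω ∉ B i with U_def
    obtain ⟨ω, hω⟩ := exists_mul_card_le_card_filter_mem (V := U) hB
      fun i hi ↦ hq i (Finset.mem_filter.1 hi).1
    refine ⟨insert ω A, (Finset.card_insert_le ω A).trans (by omega), ?_⟩
    have left_eq : (V.filter fun i ↦ ∀ ω' ∈ insert ω A, ω' ∉ B i) =
        U.filter fun i ↦ ω ∉ B i := by
      ext i
      simp only [U_def, Finset.mem_filter, Finset.forall_mem_insert]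
      tauto
    have card_add : ((U.filter fun i ↦ ω ∈ B i).card : ℝ) + (U.filter fun i ↦ ω ∉ B i).card =
        U.card := mod_cast U.card_filter_add_card_filter_not fun i ↦ ω ∈ B i
    calc ((V.filter fun i ↦ ∀ ω' ∈ insert ω A, ω' ∉ B i).card : ℝ)
        = (U.filter fun i ↦ ω ∉ B i).card := by rw [left_eq]
      _ ≤ (1 - q) * U.card := by linarith
      _ ≤ (1 - q) * ((1 - q) ^ N * V.card) := by gcongr
      _ = (1 - q) ^ (N + 1) * V.card := by ring

end Greedy

section CoverFromCones

variable {E : Type*} [NormedAddCommGroup E] [InnerProductSpace ℝ E]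

open Classical in
lemma IsSphereCover.union_normalize {V : Finset E} {ε ψ : ℝ} (hV : IsSphereCover V ε)
    (hεψ : ε ≤ ψ) (hψ : ψ ≤ Real.pi / 2 + ε) (A : Finset E) :
    IsSphereCover ((V.filter fun v ↦ ∀ a ∈ A, a ∉ openCone v (ψ - ε)) ∪
      (A.filter (· ≠ 0)).image NormedSpace.normalize) ψ := by
  refine ⟨fun θ hθ ↦ ?_, fun u hu ↦ ?_⟩
  · obtain hθ | hθ := Finset.mem_union.1 hθ
    · exact hV.1 θ (Finset.mem_filter.1 hθ).1
    · obtain ⟨a, ha, rfl⟩ := Finset.mem_image.1 hθ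
      exact NormedSpace.norm_normalize (Finset.mem_filter.1 ha).2
  obtain ⟨v, v_mem, hv⟩ := hV.2 u hu
  by_cases missed : ∀ a ∈ A, a ∉ openCone v (ψ - ε)
  · exact ⟨v, Finset.mem_union_left _ (Finset.mem_filter.2 ⟨v_mem, missed⟩), hv.trans hεψ⟩
  push Not at missed
  obtain ⟨a, a_mem, ha⟩ := missed
  rw [openCone, Set.mem_ofPred_eq] at ha
  have a_ne : a ≠ 0 := by
    rintro rfl
    rw [angle_zero_right] at ha
    linarith
  refine ⟨NormedSpace.normalize a, Finset.mem_union_right _ (Finset.mem_image_of_mem _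
    (Finset.mem_filter.2 ⟨a_mem, a_ne⟩)), ?_⟩
  rw [angle_normalize_right]
  linarith [angle_le_angle_add_angle u v a]

lemma exists_isSphereCover_card_le [MeasurableSpace E] [BorelSpace E] [SecondCountableTopology E]
    (μ : Measure E) [IsProbabilityMeasure μ] {ε ψ p q : ℝ} (hε : 0 ≤ ε) (hεψ : ε ≤ ψ)
    (hψ : ψ ≤ Real.pi / 2 + ε) (p_pos : 0 < p) (q_le : q ≤ 1)
    (hp : ∀ v : E, ‖v‖ = 1 → p ≤ μ.real (openCone v (ε / 2)))
    (hq : ∀ v : E, ‖v‖ = 1 → q ≤ μ.real (openCone v (ψ - ε))) (N : ℕ) :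
    ∃ T : Finset E, IsSphereCover T ψ ∧ (T.card : ℝ) ≤ N + (1 - q) ^ N / p := by
  classical
  obtain ⟨V, hV, V_card⟩ := exists_isSphereCover_card_le_inv μ hε p_pos hp
  obtain ⟨A, A_card, hA⟩ := exists_finset_card_filter_notMem_le
    (fun v ↦ measurableSet_openCone v (ψ - ε)) q_le (fun v hv ↦ hq v (hV.1 v hv)) N
  refine ⟨_, hV.union_normalize hεψ hψ A, ?_⟩
  have image_card : (((A.filter (· ≠ 0)).image NormedSpace.normalize).card : ℝ) ≤ N :=
    mod_cast Finset.card_image_le.trans ((Finset.card_filter_le _ _).trans A_card)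
  calc _ ≤ (((V.filter fun v ↦ ∀ a ∈ A, a ∉ openCone v (ψ - ε)).card : ℝ) +
        ((A.filter (· ≠ 0)).image NormedSpace.normalize).card) :=
        mod_cast Finset.card_union_le _ _
    _ ≤ (1 - q) ^ N * p⁻¹ + N := by gcongr; exact hA.trans (by gcongr)
    _ = N + (1 - q) ^ N / p := by ring

end CoverFromCones

section SmallPerturbation

variable {n : ℕ} {ψ : ℝ}

lemma ne_zero_of_half_le_natCast_mul {x : ℝ} (h : 1 / 2 ≤ n * x) : n ≠ 0 := by
  rintro rfl
  norm_num at h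

lemma half_sin_pow_le_sin_sub_pow (hn : n ≠ 0) (hψ0 : 0 < ψ) (hψ : ψ < Real.pi / 2) :
    Real.sin ψ ^ n / 2 ≤ Real.sin (ψ - Real.sin ψ / (4 * n)) ^ n := by
  have sin_pos := Real.sin_pos_of_pos_of_lt_pi hψ0 (by linarith)
  have one_le : (1 : ℝ) ≤ n := mod_cast Nat.one_le_iff_ne_zero.2 hn
  have inv_le : 1 / (2 * (n : ℝ)) ≤ 1 / 2 := by gcongr; linarith
  set ε := Real.sin ψ / (4 * n) with hε
  have ε_pos : 0 < ε := by positivity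
  have ε_eq : ε = Real.sin ψ * (1 / (2 * n)) / 2 := by rw [hε]; field_simp; norm_num
  have ε_le : ε ≤ 1 / (2 * n) / 2 := by
    rw [ε_eq]
    gcongr
    exact mul_le_of_le_one_left (by positivity) (Real.sin_le_one ψ)
  have sin_mul_le : Real.sin ψ * (1 - 1 / (2 * n)) ≤ Real.sin (ψ - ε) := by
    have cos_mul_le : Real.cos ψ * Real.sin ε ≤ ε :=
      (mul_le_of_le_one_left (Real.sin_nonneg_of_nonneg_of_le_pi ε_pos.le (by
        linarith [Real.pi_gt_three])) (Real.cos_le_one ψ)).trans (Real.sin_le ε_pos.le)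
    rw [Real.sin_sub]
    nlinarith [mul_le_mul_of_nonneg_left (Real.one_sub_sq_div_two_le_cos (x := ε)) sin_pos.le]
  calc Real.sin ψ ^ n / 2 = Real.sin ψ ^ n * (1 + n * -(1 / (2 * n))) := by field_simp; ring
    _ ≤ Real.sin ψ ^ n * (1 + -(1 / (2 * n))) ^ n := by
      gcongr
      exact one_add_mul_le_pow (by linarith) n
    _ = (Real.sin ψ * (1 - 1 / (2 * n))) ^ n := by rw [← mul_pow, sub_eq_add_neg]
    _ ≤ Real.sin (ψ - ε) ^ n :=
      pow_le_pow_left₀ (mul_nonneg sin_pos.le (by linarith)) sin_mul_le n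

lemma one_add_sqrt_mul_cos_sub_le (hψ0 : 0 < ψ) (hψ : ψ < Real.pi / 2)
    (h : 1 / 2 ≤ n * Real.cos ψ ^ 2) :
    1 + √n * Real.cos (ψ - Real.sin ψ / (4 * n)) ≤ 3 * (√n * Real.cos ψ) := by
  have sin_pos := Real.sin_pos_of_pos_of_lt_pi hψ0 (by linarith)
  have cos_pos := Real.cos_pos_of_mem_Ioo ⟨by linarith, hψ⟩
  have one_le : (1 : ℝ) ≤ n :=
    mod_cast Nat.one_le_iff_ne_zero.2 (ne_zero_of_half_le_natCast_mul h)
  set ε := Real.sin ψ / (4 * n) with hε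
  have ε_pos : 0 < ε := by positivity
  have cos_sub_le : Real.cos (ψ - ε) ≤ Real.cos ψ + ε := by
    rw [Real.cos_sub]
    nlinarith [Real.cos_le_one ε, Real.sin_le ε_pos.le, Real.sin_le_one ψ]
  have sqrt_mul_ε_le : √n * ε ≤ 1 / 4 := by
    calc √n * ε ≤ n * ε := by gcongr; exact Real.sqrt_le_self_iff.2 (.inr one_le)
      _ = Real.sin ψ / 4 := by rw [hε]; field_simp
      _ ≤ 1 / 4 := by gcongr; exact Real.sin_le_one ψ
  have sqrt_mul_cos_ge : 5 / 8 ≤ √n * Real.cos ψ := by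
    refine le_of_pow_le_pow_left₀ two_ne_zero (by positivity) ?_
    rw [mul_pow, Real.sq_sqrt (by linarith)]
    linarith
  nlinarith [mul_le_mul_of_nonneg_left cos_sub_le (Real.sqrt_nonneg n)]

lemma sin_pow_div_le_measureReal_openCone_sub (hψ0 : 0 < ψ) (hψ : ψ < Real.pi / 2)
    (h : 1 / 2 ≤ n * Real.cos ψ ^ 2) {v : EuclideanSpace ℝ (Fin (n + 1))} (hv : ‖v‖ = 1) :
    Real.sin ψ ^ n / (540 * (√n * Real.cos ψ)) ≤
      (stdGaussian (EuclideanSpace ℝ (Fin (n + 1)))).real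
        (openCone v (ψ - Real.sin ψ / (4 * n))) := by
  have hn := ne_zero_of_half_le_natCast_mul h
  have sin_pos := Real.sin_pos_of_pos_of_lt_pi hψ0 (by linarith)
  have one_le : (1 : ℝ) ≤ n := mod_cast Nat.one_le_iff_ne_zero.2 hn
  have ε_lt : Real.sin ψ / (4 * n) < ψ :=
    (div_le_self sin_pos.le (by linarith)).trans_lt (Real.sin_lt hψ0)
  have ε_pos : 0 < Real.sin ψ / (4 * n) := by positivity
  have cos_pos := Real.cos_pos_of_mem_Ioo (x := ψ - Real.sin ψ / (4 * n))
    ⟨by linarith, by linarith⟩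
  calc Real.sin ψ ^ n / (540 * (√n * Real.cos ψ))
      = Real.sin ψ ^ n / 2 / (90 * (3 * (√n * Real.cos ψ))) := by ring
    _ ≤ _ := div_le_div₀ (pow_nonneg (Real.sin_nonneg_of_nonneg_of_le_pi (by linarith)
        (by linarith)) n) (half_sin_pow_le_sin_sub_pow hn hψ0 hψ) (by positivity)
        (mul_le_mul_of_nonneg_left (one_add_sqrt_mul_cos_sub_le hψ0 hψ h) (by norm_num))
    _ ≤ _ := sin_pow_div_le_measureReal_openCone hn (by linarith) (by linarith) hv

lemma pow_div_le_measureReal_openCone_half (hn : n ≠ 0) {ε : ℝ} (hε0 : 0 < ε)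
    (hε : ε < Real.pi) {v : EuclideanSpace ℝ (Fin (n + 1))} (hv : ‖v‖ = 1) :
    (ε / 4) ^ n / (90 * (1 + √n)) ≤
      (stdGaussian (EuclideanSpace ℝ (Fin (n + 1)))).real (openCone v (ε / 2)) := by
  have quarter_le : ε / 4 ≤ Real.sin (ε / 2) :=
    calc ε / 4 = ε / 2 * (2 / 4) := by ring
      _ ≤ ε / 2 * (2 / Real.pi) := by gcongr; exact Real.pi_le_four
      _ ≤ Real.sin (ε / 2) := by
        rw [mul_comm]
        exact Real.mul_le_sin (by linarith) (by linarith)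
  have sin_nonneg : 0 ≤ Real.sin (ε / 2) := by linarith
  have cos_pos := Real.cos_pos_of_mem_Ioo (x := ε / 2) ⟨by linarith, by linarith⟩
  calc (ε / 4) ^ n / (90 * (1 + √n))
      ≤ Real.sin (ε / 2) ^ n / (90 * (1 + √n * Real.cos (ε / 2))) := by
        gcongr
        exact mul_le_of_le_one_right (Real.sqrt_nonneg n) (Real.cos_le_one _)
    _ ≤ _ := sin_pow_div_le_measureReal_openCone hn (by linarith) (by linarith) hv

end SmallPerturbation

section LogDimensionCover

lemma one_sub_pow_ceil_div_le_exp_neg {q : ℝ} (q_pos : 0 < q) (q_le : q ≤ 1) (t : ℝ) :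
    (1 - q) ^ ⌈t / q⌉₊ ≤ Real.exp (-t) :=
  calc (1 - q) ^ ⌈t / q⌉₊ ≤ Real.exp (-q) ^ ⌈t / q⌉₊ := by
        gcongr
        exact Real.one_sub_le_exp_neg q
    _ = Real.exp (⌈t / q⌉₊ * -q) := (Real.exp_nat_mul _ _).symm
    _ ≤ Real.exp (-t) := by
        gcongr
        have := (div_le_iff₀ q_pos).1 (Nat.le_ceil (t / q))
        linarith

lemma one_add_sqrt_mul_pow_le {n : ℕ} (hn : n ≠ 0) :
    (1 + √n) * (16 * n : ℝ) ^ n ≤ (1 + n : ℝ) ^ (6 * n) := by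
  have one_le : (1 : ℝ) ≤ n := mod_cast Nat.one_le_iff_ne_zero.2 hn
  have sixteen_mul_le : (16 * n : ℝ) ≤ (1 + n) ^ 5 :=
    calc (16 * n : ℝ) ≤ 2 ^ 4 * (1 + n) := by linarith
      _ ≤ (1 + n) ^ 4 * (1 + n) := by gcongr; linarith
      _ = (1 + n) ^ 5 := (pow_succ _ _).symm
  calc (1 + √n) * (16 * n : ℝ) ^ n ≤ (1 + n) ^ n * ((1 + n) ^ 5) ^ n := by
        gcongr
        exact (add_le_add_right (Real.sqrt_le_self_iff.2 (.inr one_le)) 1).trans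
          (le_self_pow₀ (by linarith) hn)
    _ = (1 + n : ℝ) ^ (6 * n) := by rw [← pow_mul, ← pow_add]; congr 1; ring

lemma exp_neg_div_le_div_pow {n : ℕ} (hn : n ≠ 0) {s : ℝ} (hs : 0 < s) :
    Real.exp (-(6 * n * Real.log (1 + n))) / ((s / (4 * n) / 4) ^ n / (90 * (1 + √n))) ≤
      90 / s ^ n := by
  have exp_eq : Real.exp (-(6 * n * Real.log (1 + n))) = ((1 + n : ℝ) ^ (6 * n))⁻¹ := by
    rw [Real.exp_neg, ← Real.exp_log (x := (1 + n : ℝ) ^ (6 * n)) (by positivity), Real.log_pow]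
    push_cast
    rfl
  calc Real.exp (-(6 * n * Real.log (1 + n))) / ((s / (4 * n) / 4) ^ n / (90 * (1 + √n)))
      = 90 / s ^ n * (((1 + √n) * (16 * n : ℝ) ^ n) / (1 + n : ℝ) ^ (6 * n)) := by
        rw [exp_eq, show s / (4 * n) / 4 = s / (16 * n) by ring, div_pow]
        field_simp
    _ ≤ 90 / s ^ n :=
        mul_le_of_le_one_right (by positivity)
          (div_le_one_of_le₀ (one_add_sqrt_mul_pow_le hn) (by positivity))

lemma rpow_three_halves {x : ℝ} (hx : 0 ≤ x) : x ^ ((3 : ℝ) / 2) = x * √x := by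
  rw [show (3 : ℝ) / 2 = 1 + 1 / 2 by norm_num, Real.rpow_add' hx (by norm_num), Real.rpow_one,
    ← Real.sqrt_eq_rpow]

variable {n : ℕ} {ψ : ℝ}

lemma six_mul_log_div_add_le (hψ0 : 0 < ψ) (hψ : ψ < Real.pi / 2)
    (h : 1 / 2 ≤ n * Real.cos ψ ^ 2) :
    6 * n * Real.log (1 + n) / (Real.sin ψ ^ n / (540 * (√n * Real.cos ψ))) + 1 +
        90 / Real.sin ψ ^ n ≤
      4000 * (Real.cos ψ / Real.sin ψ ^ n) * (n : ℝ) ^ ((3 : ℝ) / 2) * Real.log (1 + n) := by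
  have sin_pos := Real.sin_pos_of_pos_of_lt_pi hψ0 (by linarith)
  have one_le : (1 : ℝ) ≤ n :=
    mod_cast Nat.one_le_iff_ne_zero.2 (ne_zero_of_half_le_natCast_mul h)
  have pow_le_one : Real.sin ψ ^ n ≤ 1 := pow_le_one₀ sin_pos.le (Real.sin_le_one ψ)
  set y := √n * Real.cos ψ with hy
  have y_ge : 7 / 10 ≤ y := by
    refine le_of_pow_le_pow_left₀ two_ne_zero (mul_nonneg (Real.sqrt_nonneg n)
      (Real.cos_pos_of_mem_Ioo ⟨by linarith, hψ⟩).le) ?_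
    rw [hy, mul_pow, Real.sq_sqrt (by linarith)]
    linarith
  have log_ge : 69 / 100 ≤ Real.log (1 + n) :=
    (by linarith [Real.log_two_gt_d9] : 69 / 100 ≤ Real.log 2).trans (by gcongr; linarith)
  have product_ge : 91 ≤ 760 * (y * n * Real.log (1 + n)) := by
    have : 7 / 10 * 1 * (69 / 100) ≤ y * n * Real.log (1 + n) := by gcongr
    linarith
  calc 6 * n * Real.log (1 + n) / (Real.sin ψ ^ n / (540 * y)) + 1 + 90 / Real.sin ψ ^ n
      = (3240 * (y * n * Real.log (1 + n)) + Real.sin ψ ^ n + 90) / Real.sin ψ ^ n := by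
        field_simp
        ring
    _ ≤ 4000 * (y * n * Real.log (1 + n)) / Real.sin ψ ^ n := by gcongr; linarith
    _ = 4000 * (Real.cos ψ / Real.sin ψ ^ n) * (n : ℝ) ^ ((3 : ℝ) / 2) * Real.log (1 + n) := by
        rw [rpow_three_halves n.cast_nonneg, hy]
        ring

lemma exists_isSphereCover_card_le_log_one_add (hψ0 : 0 < ψ) (hψ : ψ < Real.pi / 2)
    (h : 1 / 2 ≤ n * Real.cos ψ ^ 2) :
    ∃ T : Finset (EuclideanSpace ℝ (Fin (n + 1))), IsSphereCover T ψ ∧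
      (T.card : ℝ) ≤ 4000 * (Real.cos ψ / Real.sin ψ ^ n) * (n : ℝ) ^ ((3 : ℝ) / 2) *
        Real.log (1 + n) := by
  have hn := ne_zero_of_half_le_natCast_mul h
  have sin_pos := Real.sin_pos_of_pos_of_lt_pi hψ0 (by linarith)
  have cos_pos := Real.cos_pos_of_mem_Ioo ⟨by linarith, hψ⟩
  have one_le : (1 : ℝ) ≤ n := mod_cast Nat.one_le_iff_ne_zero.2 hn
  set ε := Real.sin ψ / (4 * n)
  set p := (ε / 4) ^ n / (90 * (1 + √n))
  set q := Real.sin ψ ^ n / (540 * (√n * Real.cos ψ))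
  have ε_pos : 0 < ε := by positivity
  have ε_lt : ε < ψ := (div_le_self sin_pos.le (by linarith)).trans_lt (Real.sin_lt hψ0)
  have q_pos : 0 < q := by positivity
  have hq (v : EuclideanSpace ℝ (Fin (n + 1))) (hv : ‖v‖ = 1) :=
    sin_pow_div_le_measureReal_openCone_sub hψ0 hψ h hv
  have q_le : q ≤ 1 := (hq (EuclideanSpace.single 0 1) (by simp)).trans measureReal_le_one
  set N := ⌈6 * n * Real.log (1 + n) / q⌉₊
  obtain ⟨T, hT, T_card⟩ := exists_isSphereCover_card_le
    (stdGaussian (EuclideanSpace ℝ (Fin (n + 1)))) ε_pos.le ε_lt.le (by linarith)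
    (by positivity : 0 < p) q_le
    (fun v hv ↦ pow_div_le_measureReal_openCone_half hn ε_pos (by linarith) hv) hq N
  refine ⟨T, hT, ?_⟩
  calc (T.card : ℝ) ≤ N + (1 - q) ^ N / p := T_card
    _ ≤ (6 * n * Real.log (1 + n) / q + 1) + Real.exp (-(6 * n * Real.log (1 + n))) / p := by
      gcongr
      · have := Real.log_nonneg (x := 1 + n) (by linarith)
        exact (Nat.ceil_lt_add_one (by positivity)).le
      · exact one_sub_pow_ceil_div_le_exp_neg q_pos q_le _
    _ ≤ 6 * n * Real.log (1 + n) / q + 1 + 90 / Real.sin ψ ^ n := by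
      exact add_le_add_right (exp_neg_div_le_div_pow hn sin_pos) _
    _ ≤ _ := six_mul_log_div_add_le hψ0 hψ h

end LogDimensionCover

section Blocks

variable {ι κ α : Type*} [Fintype ι] [Fintype κ] [Fintype α]

/-- The embedding of Euclidean spaces that places the `k`-th coordinate of its argument at position
`e k` and fills the remaining positions with zeros. It carries covers of the unit sphere of a
coordinate subspace to the ambient space. -/
noncomputable def zeroExtend (e : κ ↪ ι) (θ : EuclideanSpace ℝ κ) : EuclideanSpace ℝ ι :=
  WithLp.toLp 2 (Function.extend e θ 0)

lemma inner_zeroExtend (e : κ ↪ ι) (v : EuclideanSpace ℝ ι) (θ : EuclideanSpace ℝ κ) :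
    ⟪v, zeroExtend e θ⟫ = ⟪WithLp.toLp 2 (v ∘ e), θ⟫ := by
  simp only [PiLp.inner_apply]
  refine (Fintype.sum_of_injective e e.injective _ _ (fun i hi ↦ ?_) fun k ↦ ?_).symm
  · simp [zeroExtend, Function.extend_apply' _ _ _ (by simpa using hi)]
  · simp [zeroExtend, e.injective.extend_apply]

lemma norm_zeroExtend (e : κ ↪ ι) (θ : EuclideanSpace ℝ κ) : ‖zeroExtend e θ‖ = ‖θ‖ := by
  rw [norm_eq_sqrt_real_inner, inner_zeroExtend, norm_eq_sqrt_real_inner θ]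
  congr 3
  exact funext fun k ↦ e.injective.extend_apply θ 0 k

lemma sum_le_sum_comp_of_surjective {g : κ → ι} (hg : g.Surjective) {f : ι → ℝ}
    (hf : ∀ i, 0 ≤ f i) : ∑ i, f i ≤ ∑ k, f (g k) :=
  calc ∑ i, f i = ∑ i, f (g (Function.surjInv hg i)) := by simp only [Function.surjInv_eq]
    _ = ∑ k ∈ Finset.univ.map ⟨Function.surjInv hg, Function.injective_surjInv hg⟩, f (g k) := by
      rw [Finset.sum_map, Function.Embedding.coeFn_mk]
    _ ≤ ∑ k, f (g k) := Finset.sum_le_univ_sum_of_nonneg fun k ↦ hf (g k)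

lemma exists_one_le_sqrt_card_mul_norm {e : α → κ ↪ ι} (he : ∀ i, ∃ a k, e a k = i)
    {v : EuclideanSpace ℝ ι} (hv : ‖v‖ = 1) :
    ∃ a, 1 ≤ √(Fintype.card α) * ‖WithLp.toLp 2 (v ∘ e a)‖ := by
  have surjective : (fun x : α × κ ↦ e x.1 x.2).Surjective := fun i ↦
    let ⟨a, k, hak⟩ := he i
    ⟨(a, k), hak⟩
  have one_le_sum : 1 ≤ ∑ a, ‖WithLp.toLp 2 (v ∘ e a)‖ ^ 2 := by
    calc (1 : ℝ) = ∑ i, v i ^ 2 := by rw [← EuclideanSpace.real_norm_sq_eq, hv, one_pow]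
      _ ≤ ∑ x : α × κ, v (e x.1 x.2) ^ 2 :=
        sum_le_sum_comp_of_surjective surjective fun i ↦ sq_nonneg (v i)
      _ = ∑ a, ‖WithLp.toLp 2 (v ∘ e a)‖ ^ 2 := by
        simp [Fintype.sum_prod_type, EuclideanSpace.real_norm_sq_eq]
  have univ_nonempty : (Finset.univ : Finset α).Nonempty := by
    rw [Finset.nonempty_iff_ne_empty]
    intro univ_eq
    norm_num [univ_eq] at one_le_sum
  obtain ⟨a, -, ha⟩ := Finset.exists_le_of_sum_le (f := fun _ ↦ (1 : ℝ))
    (g := fun a ↦ Fintype.card α * ‖WithLp.toLp 2 (v ∘ e a)‖ ^ 2) univ_nonempty (by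
      rw [← Finset.mul_sum, Finset.sum_const, Finset.card_univ, nsmul_eq_mul]
      gcongr)
  refine ⟨a, (one_le_sq_iff₀ (by positivity)).1 ?_⟩
  rwa [mul_pow, Real.sq_sqrt (by positivity)]

open Classical in
lemma IsSphereCover.biUnion_image_zeroExtend {e : α → κ ↪ ι} (he : ∀ i, ∃ a k, e a k = i)
    {T : Finset (EuclideanSpace ℝ κ)} {φ ψ : ℝ} (hT : IsSphereCover T φ) (hφ : φ ≤ Real.pi)
    (hψ0 : 0 ≤ ψ) (hψ : ψ ≤ Real.pi / 2) (h : √(Fintype.card α) * Real.cos ψ ≤ Real.cos φ) :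
    IsSphereCover (Finset.univ.biUnion fun a ↦ T.image (zeroExtend (e a))) ψ := by
  have cos_nonneg := Real.cos_nonneg_of_mem_Icc (x := ψ) ⟨by linarith, hψ⟩
  refine ⟨fun θ hθ ↦ ?_, fun v hv ↦ ?_⟩
  · obtain ⟨a, -, hθ⟩ := Finset.mem_biUnion.1 hθ
    obtain ⟨η, hη, rfl⟩ := Finset.mem_image.1 hθ
    rw [norm_zeroExtend, hT.1 η hη]
  obtain ⟨a, ha⟩ := exists_one_le_sqrt_card_mul_norm he hv
  have inner_eq := inner_zeroExtend (e a) v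
  generalize WithLp.toLp 2 (v ∘ e a) = w at ha inner_eq
  have w_ne : w ≠ 0 := by
    rintro rfl
    norm_num at ha
  obtain ⟨θ, hθ, angle_le⟩ := hT.2 _ (NormedSpace.norm_normalize w_ne)
  rw [angle_normalize_left] at angle_le
  refine ⟨zeroExtend (e a) θ, Finset.mem_biUnion.2 ⟨a, Finset.mem_univ a,
    Finset.mem_image_of_mem _ hθ⟩, ?_⟩
  rw [← Real.strictAntiOn_cos.le_iff_ge ⟨hψ0, by linarith⟩ ⟨angle_nonneg _ _, angle_le_pi _ _⟩]
  calc Real.cos ψ ≤ √(Fintype.card α) * ‖w‖ * Real.cos ψ := le_mul_of_one_le_left cos_nonneg ha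
    _ = ‖w‖ * (√(Fintype.card α) * Real.cos ψ) := by ring
    _ ≤ ‖w‖ * Real.cos φ := by gcongr
    _ ≤ ‖w‖ * Real.cos (angle w θ) := by
      gcongr
      exact Real.cos_le_cos_of_nonneg_of_le_pi (angle_nonneg _ _) hφ angle_le
    _ = Real.cos (angle v (zeroExtend (e a) θ)) := by
      rw [cos_angle, cos_angle, inner_eq, norm_zeroExtend, hT.1 θ hθ, hv]
      field_simp

lemma exists_embedding_covering {d m k : ℕ} (hm : m ≤ d) (hk : d ≤ k * m) :
    ∃ e : Fin k → Fin m ↪ Fin d, ∀ i, ∃ a j, e a j = i := by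
  refine ⟨fun a ↦ ⟨fun j ↦ ⟨(a * m + j) % d, Nat.mod_lt _ (j.pos.trans_le hm)⟩, fun j j' hjj' ↦ ?_⟩,
    fun i ↦ ⟨⟨i / m, ?_⟩, ⟨i % m, ?_⟩, ?_⟩⟩
  · have mod_eq : a * m + j ≡ a * m + j' [MOD d] := congrArg Fin.val hjj'
    exact Fin.ext ((Nat.ModEq.add_left_cancel' _ mod_eq).eq_of_lt_of_lt (by omega) (by omega))
  · exact Nat.div_lt_of_lt_mul (by rw [mul_comm]; omega)
  · refine Nat.mod_lt _ (Nat.pos_of_ne_zero ?_)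
    rintro rfl
    have := i.2
    omega
  · exact Fin.ext ((congrArg (· % d) (Nat.div_add_mod' i m)).trans (Nat.mod_eq_of_lt i.2))

lemma IsSphereCover.exists_card_le_mul {d m k : ℕ} (hm : m ≤ d) (hk : d ≤ k * m)
    {T : Finset (EuclideanSpace ℝ (Fin m))} {φ ψ : ℝ} (hT : IsSphereCover T φ) (hφ : φ ≤ Real.pi)
    (hψ0 : 0 ≤ ψ) (hψ : ψ ≤ Real.pi / 2) (h : √k * Real.cos ψ ≤ Real.cos φ) :
    ∃ T' : Finset (EuclideanSpace ℝ (Fin d)), IsSphereCover T' ψ ∧ T'.card ≤ k * T.card := by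
  classical
  obtain ⟨e, he⟩ := exists_embedding_covering hm hk
  refine ⟨_, hT.biUnion_image_zeroExtend he hφ hψ0 hψ (by simpa using h), ?_⟩
  simpa using Finset.card_biUnion_le_card_mul Finset.univ
    (fun a ↦ T.image (zeroExtend (e a))) T.card fun _ _ ↦ Finset.card_image_le

end Blocks

section BlockParameters

lemma log_one_add_le_four_mul_log {x y : ℝ} (hx : 1 / 2 ≤ x) (hy : 0 ≤ y)
    (hyx : y ≤ 1 + 8 * x ^ 2) : Real.log (1 + y) ≤ 4 * Real.log (1 + x) := by
  have one_add_le : 1 + y ≤ (1 + x) ^ 4 := by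
    nlinarith [mul_nonneg (sq_nonneg x) (sub_nonneg.2 hx), sq_nonneg (x ^ 2)]
  calc Real.log (1 + y) ≤ Real.log ((1 + x) ^ 4) := by gcongr
    _ = 4 * Real.log (1 + x) := by rw [Real.log_pow]; norm_num

lemma exp_neg_add_sq_le_one_sub {y : ℝ} (hy0 : 0 ≤ y) (hy : y ≤ 1 / 2) :
    Real.exp (-(y + y ^ 2)) ≤ 1 - y := by
  have quadratic_le := Real.quadratic_le_exp_of_nonneg (x := y + y ^ 2) (by positivity)
  rw [Real.exp_neg, inv_le_comm₀ (Real.exp_pos _) (by linarith),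
    inv_le_iff_one_le_mul₀ (by linarith)]
  nlinarith [mul_nonneg hy0 hy0, mul_nonneg (mul_nonneg hy0 hy0) (sub_nonneg.2 hy),
    mul_le_mul_of_nonneg_right quadratic_le (by linarith : 0 ≤ 1 - y)]

lemma one_sub_pow_le_three_mul_one_sub_pow {c y : ℝ} {n p : ℕ} (hc : c ≤ 1) (hy0 : 0 ≤ y)
    (hy : y ≤ 1 / 2) (h : p * (y + y ^ 2) ≤ n * c + 1) : (1 - c) ^ n ≤ 3 * (1 - y) ^ p :=
  calc (1 - c) ^ n ≤ Real.exp (-c) ^ n := by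
        gcongr
        exact Real.one_sub_le_exp_neg c
    _ = Real.exp (n * -c) := (Real.exp_nat_mul _ _).symm
    _ ≤ Real.exp (1 + p * -(y + y ^ 2)) := by gcongr; linarith
    _ = Real.exp 1 * Real.exp (-(y + y ^ 2)) ^ p := by rw [Real.exp_add, Real.exp_nat_mul]
    _ ≤ 3 * (1 - y) ^ p := by
        gcongr
        · exact Real.exp_one_lt_three.le
        · exact exp_neg_add_sq_le_one_sub hy0 hy

lemma exists_le_mul_le_add (n : ℕ) {k : ℕ} (hk : k ≠ 0) :
    ∃ p, p ≤ n ∧ n ≤ k * p ∧ k * p ≤ n + k := by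
  have pos : 0 < k := Nat.pos_of_ne_zero hk
  refine ⟨n ⌈/⌉ k, ceilDiv_le_iff_le_mul pos |>.2 (Nat.le_mul_of_pos_left n pos),
    le_smul_ceilDiv pos, ?_⟩
  have := Nat.mul_div_le (n + k - 1) k
  rw [Nat.ceilDiv_eq_add_pred_div]
  omega

lemma exists_block_parameters {n : ℕ} {c : ℝ} (hc : 0 < c) (h : 1 / 2 ≤ n * c)
    (small : 4 * n * c ^ 2 ≤ 1) :
    ∃ k p : ℕ, p ≤ n ∧ n ≤ k * p ∧ k * p ≤ 2 * n ∧
      (p : ℝ) ≤ 1 + 8 * (n * c) ^ 2 ∧ k * c ≤ 1 / 2 ∧ p * (k * c + (k * c) ^ 2) ≤ n * c + 1 := by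
  have n_pos : (0 : ℝ) < n := pos_of_mul_pos_left (by linarith) hc.le
  -- As many blocks as keep the second-order loss `p * (k * c) ^ 2` bounded; the block dimension
  -- `p ≈ n / k` is then of order `(n * c) ^ 2`.
  set K := 1 / (4 * n * c ^ 2) with hK
  have one_le_K : 1 ≤ K := by rwa [hK, le_div_iff₀ (by positivity), one_mul]
  have K_mul_c : K * c * (n * c) = 1 / 4 := by rw [hK]; field_simp
  set k := ⌊K⌋₊
  have one_le_k : (1 : ℝ) ≤ k := Nat.one_le_cast.2 (Nat.le_floor (mod_cast one_le_K))
  have k_le : (k : ℝ) ≤ K := Nat.floor_le (by linarith)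
  have K_le : K ≤ 2 * k := by linarith [Nat.lt_floor_add_one K]
  have K_le_n : K ≤ n := by
    rw [hK, div_le_iff₀ (by positivity)]
    nlinarith
  have K_mul_c_le : K * c ≤ 1 / 2 := by nlinarith [mul_pos (by linarith : 0 < K) hc]
  have k_mul_c_le : k * c ≤ K * c := by gcongr
  have k_ne_zero : k ≠ 0 := by
    rintro k_eq
    norm_num [k_eq] at one_le_k
  obtain ⟨p, p_le_n, n_le, kp_le⟩ := exists_le_mul_le_add n k_ne_zero
  have kp_le_add : (k : ℝ) * p ≤ n + k := mod_cast kp_le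
  have kp_le_two_mul : (k : ℝ) * p ≤ 2 * n := by linarith
  refine ⟨k, p, p_le_n, n_le, mod_cast kp_le_two_mul, ?_,
    k_mul_c_le.trans K_mul_c_le, ?_⟩
  · have n_le_mul : n ≤ k * (8 * (n * c) ^ 2) :=
      calc (n : ℝ) = 4 * n * (K * c * (n * c)) := by rw [K_mul_c]; ring
        _ ≤ 4 * n * (2 * k * c * (n * c)) := by gcongr
        _ = k * (8 * (n * c) ^ 2) := by ring
    exact le_of_mul_le_mul_left (by linarith) (zero_lt_one.trans_le one_le_k)
  · have linear_le : p * (k * c) ≤ n * c + 1 / 2 := by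
      linarith [mul_le_mul_of_nonneg_right kp_le_add hc.le]
    have quadratic_le : p * (k * c) ^ 2 ≤ 1 / 2 :=
      calc p * (k * c) ^ 2 = k * p * (k * c ^ 2) := by ring
        _ ≤ 2 * n * (K * c ^ 2) := by gcongr
        _ = 2 * (K * c * (n * c)) := by ring
        _ = 1 / 2 := by rw [K_mul_c]; norm_num
    linarith

end BlockParameters

section BlockCover

lemma two_rpow_three_halves_le_three : (2 : ℝ) ^ ((3 : ℝ) / 2) ≤ 3 := by
  rw [rpow_three_halves zero_le_two]
  nlinarith [Real.sq_sqrt (zero_le_two (α := ℝ)), Real.sqrt_nonneg 2]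

variable {n : ℕ} {ψ : ℝ}

lemma sin_pow_le_two_mul_sin_arccos_pow {k p : ℕ} (hkc : k * Real.cos ψ ^ 2 ≤ 1 / 2)
    (hp : p * (k * Real.cos ψ ^ 2 + (k * Real.cos ψ ^ 2) ^ 2) ≤ n * Real.cos ψ ^ 2 + 1) :
    Real.sin ψ ^ n ≤ 2 * Real.sin (Real.arccos (√k * Real.cos ψ)) ^ p := by
  rw [Real.sin_arccos, mul_pow, Real.sq_sqrt k.cast_nonneg]
  refine le_of_pow_le_pow_left₀ two_ne_zero (by positivity) ?_
  calc (Real.sin ψ ^ n) ^ 2 = (1 - Real.cos ψ ^ 2) ^ n := by rw [← Real.sin_sq, pow_right_comm]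
    _ ≤ 3 * (1 - k * Real.cos ψ ^ 2) ^ p :=
      one_sub_pow_le_three_mul_one_sub_pow (Real.cos_sq_le_one ψ) (by positivity) hkc hp
    _ ≤ 4 * (1 - k * Real.cos ψ ^ 2) ^ p := by
      have pow_nonneg : 0 ≤ (1 - k * Real.cos ψ ^ 2) ^ p := pow_nonneg (by linarith) p
      linarith
    _ = (2 * √(1 - k * Real.cos ψ ^ 2) ^ p) ^ 2 := by
      rw [mul_pow, pow_right_comm, Real.sq_sqrt (by linarith)]
      norm_num

lemma exists_isSphereCover_card_le_of_blocks (hψ0 : 0 < ψ) (hψ : ψ < Real.pi / 2)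
    {k p : ℕ} (hpn : p ≤ n) (hn : n ≤ k * p) (h : 1 / 2 ≤ n * Real.cos ψ ^ 2)
    (hkc : k * Real.cos ψ ^ 2 ≤ 1 / 2)
    (hp : p * (k * Real.cos ψ ^ 2 + (k * Real.cos ψ ^ 2) ^ 2) ≤ n * Real.cos ψ ^ 2 + 1) :
    ∃ T : Finset (EuclideanSpace ℝ (Fin (n + 1))), IsSphereCover T ψ ∧
      (T.card : ℝ) ≤ 8000 * (Real.cos ψ / Real.sin ψ ^ n) * ((k * p : ℕ) : ℝ) ^ ((3 : ℝ) / 2) *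
        Real.log (1 + p) := by
  have sin_pos := Real.sin_pos_of_pos_of_lt_pi hψ0 (by linarith)
  have cos_pos := Real.cos_pos_of_mem_Ioo ⟨by linarith, hψ⟩
  have k_pos : 0 < k := by
    refine Nat.pos_of_ne_zero ?_
    rintro rfl
    exact ne_zero_of_half_le_natCast_mul h (by omega)
  set y := √k * Real.cos ψ with hy
  have y_sq : y ^ 2 = k * Real.cos ψ ^ 2 := by rw [hy, mul_pow, Real.sq_sqrt (by positivity)]
  have y_pos : 0 < y := by positivity
  have y_lt : y < 1 := by nlinarith
  have cos_arccos := Real.cos_arccos (x := y) (by linarith) y_lt.le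
  have sin_pow_le := sin_pow_le_two_mul_sin_arccos_pow hkc hp
  obtain ⟨T, hT, T_card⟩ := exists_isSphereCover_card_le_log_one_add (n := p)
    (Real.arccos_pos.2 y_lt) (Real.arccos_lt_pi_div_two.2 y_pos) (by
      rw [cos_arccos, y_sq, ← mul_assoc, mul_comm (p : ℝ)]
      exact h.trans (by gcongr; exact_mod_cast hn))
  rw [cos_arccos] at T_card
  have dim_le : n + 1 ≤ k * (p + 1) := by
    rw [mul_add]
    omega
  obtain ⟨T', hT', T'_card⟩ := hT.exists_card_le_mul (Nat.succ_le_succ hpn) dim_le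
    (Real.arccos_le_pi y) hψ0.le hψ.le cos_arccos.ge
  refine ⟨T', hT', ?_⟩
  calc (T'.card : ℝ) ≤ k * T.card := mod_cast T'_card
    _ ≤ k * (4000 * (y / Real.sin (Real.arccos y) ^ p) * (p : ℝ) ^ ((3 : ℝ) / 2) *
        Real.log (1 + p)) := by gcongr
    _ ≤ k * (4000 * (y / (Real.sin ψ ^ n / 2)) * (p : ℝ) ^ ((3 : ℝ) / 2) *
        Real.log (1 + p)) := by
      have log_nonneg : 0 ≤ Real.log (1 + p) := Real.log_nonneg (by simp)
      gcongr
      linarith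
    _ = _ := by
      push_cast
      rw [Real.mul_rpow (by positivity) (by positivity), rpow_three_halves k.cast_nonneg, hy]
      ring

theorem exists_isSphereCover_card_le_log_one_add_mul_cos_sq (hψ0 : 0 < ψ) (hψ : ψ < Real.pi / 2)
    (h : 1 / 2 ≤ n * Real.cos ψ ^ 2) :
    ∃ T : Finset (EuclideanSpace ℝ (Fin (n + 1))), IsSphereCover T ψ ∧
      (T.card : ℝ) ≤ 100000 * (Real.cos ψ / Real.sin ψ ^ n) * (n : ℝ) ^ ((3 : ℝ) / 2) *
        Real.log (1 + n * Real.cos ψ ^ 2) := by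
  have sin_pos := Real.sin_pos_of_pos_of_lt_pi hψ0 (by linarith)
  have cos_pos := Real.cos_pos_of_mem_Ioo ⟨by linarith, hψ⟩
  have log_nonneg : 0 ≤ Real.log (1 + n * Real.cos ψ ^ 2) := Real.log_nonneg (by linarith)
  obtain large | small := le_total 1 (4 * n * (Real.cos ψ ^ 2) ^ 2)
  · obtain ⟨T, hT, T_card⟩ := exists_isSphereCover_card_le_log_one_add hψ0 hψ h
    refine ⟨T, hT, T_card.trans ?_⟩
    have log_le := log_one_add_le_four_mul_log h n.cast_nonneg (by nlinarith)
    calc _ ≤ 4000 * (Real.cos ψ / Real.sin ψ ^ n) * (n : ℝ) ^ ((3 : ℝ) / 2) *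
          (4 * Real.log (1 + n * Real.cos ψ ^ 2)) := by gcongr
      _ = 16000 * (Real.cos ψ / Real.sin ψ ^ n) * (n : ℝ) ^ ((3 : ℝ) / 2) *
          Real.log (1 + n * Real.cos ψ ^ 2) := by ring
      _ ≤ _ := by gcongr; norm_num
  · obtain ⟨k, p, hpn, hn, hkp, hp, hkc, hpc⟩ :=
      exists_block_parameters (by positivity) h small
    obtain ⟨T, hT, T_card⟩ := exists_isSphereCover_card_le_of_blocks hψ0 hψ hpn hn h hkc hpc
    refine ⟨T, hT, T_card.trans ?_⟩
    have log_le := log_one_add_le_four_mul_log h p.cast_nonneg hp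
    have rpow_le : ((k * p : ℕ) : ℝ) ^ ((3 : ℝ) / 2) ≤ 3 * (n : ℝ) ^ ((3 : ℝ) / 2) :=
      calc _ ≤ (2 * n : ℝ) ^ ((3 : ℝ) / 2) := by gcongr; exact_mod_cast hkp
        _ = 2 ^ ((3 : ℝ) / 2) * (n : ℝ) ^ ((3 : ℝ) / 2) :=
          Real.mul_rpow zero_le_two n.cast_nonneg
        _ ≤ _ := by gcongr; exact two_rpow_three_halves_le_three
    have log_one_add_nonneg : 0 ≤ Real.log (1 + p) := Real.log_nonneg (by simp)
    calc _ ≤ 8000 * (Real.cos ψ / Real.sin ψ ^ n) * (3 * (n : ℝ) ^ ((3 : ℝ) / 2)) *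
          (4 * Real.log (1 + n * Real.cos ψ ^ 2)) := by gcongr
      _ = 96000 * (Real.cos ψ / Real.sin ψ ^ n) * (n : ℝ) ^ ((3 : ℝ) / 2) *
          Real.log (1 + n * Real.cos ψ ^ 2) := by ring
      _ ≤ _ := by gcongr; norm_num

end BlockCover

section Comparison

variable {n : ℕ} {ψ : ℝ}

lemma pi_div_two_le_sqrt_add_one (hn : 2 ≤ n) : Real.pi / 2 ≤ √(n + 1) := by
  refine Real.le_sqrt_of_sq_le ?_
  have two_le : (2 : ℝ) ≤ n := mod_cast hn
  nlinarith [Real.pi_lt_d2, Real.pi_pos]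

lemma cos_div_sin_pow_le_sqrt_div_pow (hn : n ≠ 0) (hψ0 : 0 < ψ) (hψ : ψ < Real.pi / 2) :
    Real.cos ψ / Real.sin ψ ^ n ≤ (√(n + 1) / ψ) ^ n := by
  have sin_pos := Real.sin_pos_of_pos_of_lt_pi hψ0 (by linarith)
  have cos_pos := Real.cos_pos_of_mem_Ioo ⟨by linarith, hψ⟩
  have mul_cos_le : ψ * Real.cos ψ ≤ √(n + 1) * Real.sin ψ :=
    calc ψ * Real.cos ψ ≤ Real.tan ψ * Real.cos ψ := by gcongr; exact Real.le_tan hψ0.le hψ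
      _ = Real.sin ψ := Real.tan_mul_cos cos_pos.ne'
      _ ≤ √(n + 1) * Real.sin ψ :=
        le_mul_of_one_le_left sin_pos.le (Real.one_le_sqrt.2 (by simp))
  have pow_le : ψ ^ (n - 1) ≤ (√(n + 1) * Real.sin ψ) ^ (n - 1) := by
    obtain rfl | two_le : n = 1 ∨ 2 ≤ n := by omega
    · simp
    · gcongr
      calc ψ = Real.pi / 2 * (2 / Real.pi * ψ) := by field_simp
        _ ≤ Real.pi / 2 * Real.sin ψ := by gcongr; exact Real.mul_le_sin hψ0.le hψ.le
        _ ≤ √(n + 1) * Real.sin ψ := by gcongr; exact pi_div_two_le_sqrt_add_one two_le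
  rw [div_pow, div_le_div_iff₀ (by positivity) (by positivity), ← mul_pow]
  calc Real.cos ψ * ψ ^ n = ψ ^ (n - 1) * (ψ * Real.cos ψ) := by
        rw [← pow_sub_one_mul hn]
        ring
    _ ≤ (√(n + 1) * Real.sin ψ) ^ (n - 1) * (√(n + 1) * Real.sin ψ) := by gcongr
    _ = (√(n + 1) * Real.sin ψ) ^ n := pow_sub_one_mul hn _

lemma log_one_add_mul_cos_sq_le (n : ℕ) (ψ : ℝ) :
    Real.log (1 + n * Real.cos ψ ^ 2) ≤ Real.log (n + 1) := by
  rw [add_comm (n : ℝ)]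
  gcongr
  exact mul_le_of_le_one_right n.cast_nonneg (Real.cos_sq_le_one ψ)

lemma half_le_mul_cos_sq (hn : n ≠ 0) (hψ0 : 0 ≤ ψ) (hψ : ψ < Real.arccos (√(n + 1))⁻¹) :
    1 / 2 ≤ n * Real.cos ψ ^ 2 := by
  have one_le : (1 : ℝ) ≤ n := mod_cast Nat.one_le_iff_ne_zero.2 hn
  have inv_nonneg : 0 ≤ (√((n : ℝ) + 1))⁻¹ := by positivity
  have inv_le_cos : (√((n : ℝ) + 1))⁻¹ ≤ Real.cos ψ :=
    calc (√((n : ℝ) + 1))⁻¹ = Real.cos (Real.arccos (√(n + 1))⁻¹) :=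
          (Real.cos_arccos (by linarith)
            (inv_le_one_of_one_le₀ (Real.one_le_sqrt.2 (by linarith)))).symm
      _ ≤ Real.cos ψ := Real.cos_le_cos_of_nonneg_of_le_pi hψ0 (Real.arccos_le_pi _) hψ.le
  calc (1 : ℝ) / 2 ≤ n / (n + 1) := by rw [div_le_div_iff₀] <;> linarith
    _ = n * (√((n : ℝ) + 1))⁻¹ ^ 2 := by rw [inv_pow, Real.sq_sqrt (by positivity)]; rfl
    _ ≤ n * Real.cos ψ ^ 2 := by gcongr

end Comparison

/-- Spherical covering bound: there is an absolute constant `C₂ > 0` such that for every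
dimension `d ≥ 2` and every `0 < ψ < arccos(d^{-1/2})`, the unit sphere `S^{d-1} ⊆ ℝ^d`
can be covered by at most `C₂·(cos ψ / sin^{d−1} ψ)·(d−1)^{3/2}·ln(1+(d−1)cos²ψ)`
spherical balls of geodesic radius `ψ`, and this bound is at most
`C₂·(√d/ψ)^{d−1}·(d−1)^{3/2}·ln d`. -/
theorem sphere_covering_bound :
    ∃ C₂ : ℝ, 0 < C₂ ∧ ∀ d : ℕ, 2 ≤ d → ∀ ψ : ℝ, 0 < ψ →
      ψ < Real.arccos (Real.sqrt d)⁻¹ →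
      (∃ T : Finset (EuclideanSpace ℝ (Fin d)), (∀ θ ∈ T, ‖θ‖ = 1) ∧
        (T.card : ℝ) ≤ C₂ * (Real.cos ψ / Real.sin ψ ^ (d - 1)) *
          ((d : ℝ) - 1) ^ ((3 : ℝ) / 2) * Real.log (1 + ((d : ℝ) - 1) * Real.cos ψ ^ 2) ∧
        ∀ v : EuclideanSpace ℝ (Fin d), ‖v‖ = 1 → ∃ θ ∈ T, Real.arccos ⟪v, θ⟫ ≤ ψ) ∧
      C₂ * (Real.cos ψ / Real.sin ψ ^ (d - 1)) *
          ((d : ℝ) - 1) ^ ((3 : ℝ) / 2) * Real.log (1 + ((d : ℝ) - 1) * Real.cos ψ ^ 2) ≤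
        C₂ * (Real.sqrt d / ψ) ^ (d - 1) * ((d : ℝ) - 1) ^ ((3 : ℝ) / 2) * Real.log d := by
  refine ⟨100000, by norm_num, fun d hd ψ hψ0 hψ ↦ ?_⟩
  obtain ⟨n, rfl⟩ := Nat.exists_eq_add_of_le' (one_le_two.trans hd)
  have hn : n ≠ 0 := by omega
  rw [Nat.add_sub_cancel]
  push_cast at hψ ⊢
  rw [add_sub_cancel_right]
  have ψ_lt : ψ < Real.pi / 2 := hψ.trans (Real.arccos_lt_pi_div_two.2 (by positivity))
  have half_le := half_le_mul_cos_sq hn hψ0.le hψ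
  refine ⟨?_, ?_⟩
  · obtain ⟨T, hT, T_card⟩ :=
      exists_isSphereCover_card_le_log_one_add_mul_cos_sq hψ0 ψ_lt half_le
    refine ⟨T, hT.1, T_card, fun v hv ↦ ?_⟩
    obtain ⟨θ, hθ, angle_le⟩ := hT.2 v hv
    exact ⟨θ, hθ, by simpa [angle, hv, hT.1 θ hθ] using angle_le⟩
  · have := cos_div_sin_pow_le_sqrt_div_pow hn hψ0 ψ_lt
    have := log_one_add_mul_cos_sq_le n ψ
    have : 0 ≤ Real.log (1 + n * Real.cos ψ ^ 2) := Real.log_nonneg (by linarith)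
    gcongr
end

section
/- Let n ≥ 1 and let S be a set of n points in ℝ² in strictly convex position (every point of S is a vertex of the convex hull of S). Then the number of distinct subsets of S of the form H ∩ S, where H ranges over all closed halfspaces of ℝ², equals n² − n + 2. -/
open RealInnerProductSpace

/-!
The proof is Cover's function counting argument. Let `F` be a `d`-dimensional space of functions,
and let `C(F, S)` be the number of subsets of `S` that are the negative part of some `f ∈ F` without
zeros on `S`. When a point `p` is added to `S`, such a subset extends by deciding whether to include
`p`, and both choices are available exactly when it is cut out by a function of `F` vanishing
at `p`: two functions of opposite signs at `p` have a positive combination vanishing there, and a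
function vanishing at `p` can be perturbed either way. Hence `C(F, S ∪ {p}) = C(F, S) + C(F_p, S)`
where `F_p = {f ∈ F | f p = 0}` has dimension `d - 1`. In general position, Pascal's rule then gives
`C(F, S) = 2 ∑_{k < d} (|S| - 1 choose k)`. Affine functions on the plane have `d = 3`, and by
Radon's theorem at most three points in convex position are affinely independent.
-/

open Finset Module SignType

section Dichotomies

variable {X R : Type*} [Zero R] [LinearOrder R]

/-- The dichotomies of a finite set `S` induced by a class `F` of functions, in the sense of Cover:
a splitting of `S` by the sign of some `f ∈ F` without zeros on `S` is recorded as its negative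
part. -/
def dichotomies (F : Set (X → R)) (S : Finset X) : Set (Finset X) :=
  (fun f => {x ∈ S | f x < 0}) '' {f ∈ F | ∀ x ∈ S, f x ≠ 0}

lemma subset_of_mem_dichotomies {F : Set (X → R)} {S T : Finset X} (hT : T ∈ dichotomies F S) :
    T ⊆ S := by
  obtain ⟨f, -, rfl⟩ := hT
  exact filter_subset _ _

lemma finite_dichotomies (F : Set (X → R)) (S : Finset X) : (dichotomies F S).Finite :=
  S.powerset.finite_toSet.subset fun _ hT => by simpa using subset_of_mem_dichotomies hT

lemma dichotomies_mono {F G : Set (X → R)} (h : F ⊆ G) (S : Finset X) :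
    dichotomies F S ⊆ dichotomies G S :=
  Set.image_mono fun _ hf => ⟨h hf.1, hf.2⟩

lemma filter_neg_mem_dichotomies {F : Set (X → R)} {S : Finset X} {f g : X → R} (hf : f ∈ F)
    (hg : ∀ x ∈ S, g x ≠ 0) (hfg : ∀ x ∈ S, sign (f x) = sign (g x)) :
    {x ∈ S | g x < 0} ∈ dichotomies F S := by
  refine ⟨f, ⟨hf, fun x hx => ?_⟩, filter_congr fun x hx => ?_⟩
  · rw [← sign_ne_zero, hfg x hx, sign_ne_zero]
    exact hg x hx
  · rw [← sign_eq_neg_one_iff, hfg x hx, sign_eq_neg_one_iff]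

lemma dichotomies_empty {F : Set (X → R)} (hF : F.Nonempty) : dichotomies F ∅ = {∅} := by
  simpa [dichotomies] using hF.image_const ∅

lemma dichotomies_singleton_zero {S : Finset X} (hS : S.Nonempty) :
    dichotomies ({0} : Set (X → R)) S = ∅ := by
  obtain ⟨x, hx⟩ := hS
  refine Set.image_eq_empty.2 (Set.eq_empty_of_forall_notMem ?_)
  rintro f ⟨rfl, hfS⟩
  exact hfS x hx rfl

lemma ncard_dichotomies_insert [DecidableEq X] (F : Set (X → R)) {S : Finset X} {p : X}
    (hp : p ∉ S) :
    (dichotomies F (insert p S)).ncard =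
      (dichotomies {f ∈ F | 0 < f p} S).ncard + (dichotomies {f ∈ F | f p < 0} S).ncard := by
  have hsplit : dichotomies F (insert p S) =
      dichotomies {f ∈ F | 0 < f p} S ∪ insert p '' dichotomies {f ∈ F | f p < 0} S := by
    ext T
    constructor
    · rintro ⟨f, ⟨hf, hfS⟩, rfl⟩
      rw [forall_mem_insert] at hfS
      rcases hfS.1.lt_or_gt with hfp | hfp
      · exact .inr ⟨_, ⟨f, ⟨⟨hf, hfp⟩, hfS.2⟩, rfl⟩, by simp [filter_insert, hfp]⟩
      · exact .inl ⟨f, ⟨⟨hf, hfp⟩, hfS.2⟩, by simp [filter_insert, hfp.not_gt]⟩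
    · rintro (⟨f, ⟨⟨hf, hfp⟩, hfS⟩, rfl⟩ | ⟨_, ⟨f, ⟨⟨hf, hfp⟩, hfS⟩, rfl⟩, rfl⟩)
      · exact ⟨f, ⟨hf, (forall_mem_insert _ _ _).2 ⟨hfp.ne', hfS⟩⟩,
          by simp [filter_insert, hfp.not_gt]⟩
      · exact ⟨f, ⟨hf, (forall_mem_insert _ _ _).2 ⟨hfp.ne, hfS⟩⟩, by simp [filter_insert, hfp]⟩
  have hnotMem {G : Set (X → R)} {T : Finset X} (hT : T ∈ dichotomies G S) : p ∉ T :=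
    fun hpT => hp (subset_of_mem_dichotomies hT hpT)
  have hdisj : Disjoint (dichotomies {f ∈ F | 0 < f p} S)
      (insert p '' dichotomies {f ∈ F | f p < 0} S) := by
    rw [Set.disjoint_left]
    rintro _ hT ⟨T, -, rfl⟩
    exact hnotMem hT (mem_insert_self p T)
  have hinj : Set.InjOn (insert p) (dichotomies {f ∈ F | f p < 0} S) := fun T hT T' hT' h => by
    rw [← erase_insert (hnotMem hT), h, erase_insert (hnotMem hT')]
  rw [hsplit, Set.ncard_union_eq hdisj (finite_dichotomies _ _)
    ((finite_dichotomies _ _).image _), hinj.ncard_image]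

variable {𝕜 : Type*} [Field 𝕜] [LinearOrder 𝕜] [IsStrictOrderedRing 𝕜]

lemma exists_pos_forall_sign_add_mul_eq {S : Finset X} {f : X → 𝕜} (hf : ∀ x ∈ S, f x ≠ 0)
    (g : X → 𝕜) : ∃ t > 0, ∀ x ∈ S, sign (f x + t * g x) = sign (f x) := by
  have hpos (x : S) : 0 < |f x| / (|g x| + 1) :=
    div_pos (abs_pos.2 (hf x x.2)) (by positivity)
  obtain ⟨t, ht, htS⟩ := Pi.exists_forall_pos_add_lt hpos
  refine ⟨t, ht, fun x hx => ?_⟩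
  have hsmall : |t * g x| < |f x| := by
    have := htS ⟨x, hx⟩
    rw [zero_add, lt_div_iff₀ (by positivity)] at this
    rw [abs_mul, abs_of_pos ht]
    linarith
  rcases (hf x hx).lt_or_gt with hfx | hfx
  · rw [abs_of_neg hfx] at hsmall
    rw [sign_neg hfx, sign_neg (by linarith [le_abs_self (t * g x)])]
  · rw [abs_of_pos hfx] at hsmall
    rw [sign_pos hfx, sign_pos (by linarith [neg_abs_le (t * g x)])]

lemma dichotomies_zero_subset {F : Submodule 𝕜 (X → 𝕜)} {g : X → 𝕜} (hg : g ∈ F)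
    (p : X) (S : Finset X) :
    dichotomies {f ∈ F | f p = 0} S ⊆ dichotomies {f ∈ F | sign (f p) = sign (g p)} S := by
  rintro _ ⟨f, ⟨⟨hf, hfp⟩, hfS⟩, rfl⟩
  obtain ⟨t, ht, hsign⟩ := exists_pos_forall_sign_add_mul_eq hfS g
  refine filter_neg_mem_dichotomies (f := f + t • g)
    ⟨F.add_mem hf (F.smul_mem t hg), ?_⟩ hfS hsign
  simp [hfp, sign_mul, sign_pos ht]

lemma dichotomies_pos_inter_neg_subset (F : Submodule 𝕜 (X → 𝕜)) (p : X)
    (S : Finset X) :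
    dichotomies {f ∈ F | 0 < f p} S ∩ dichotomies {f ∈ F | f p < 0} S ⊆
      dichotomies {f ∈ F | f p = 0} S := by
  rintro _ ⟨⟨f, ⟨⟨hf, hfp⟩, hfS⟩, rfl⟩, ⟨g, ⟨⟨hg, hgp⟩, hgS⟩, hgf⟩⟩
  refine filter_neg_mem_dichotomies (f := (-g p) • f + f p • g)
    ⟨F.add_mem (F.smul_mem _ hf) (F.smul_mem _ hg), ?_⟩ hfS fun x hx => ?_
  · simp [mul_comm]
  have hiff : g x < 0 ↔ f x < 0 := by simpa [hx] using Finset.ext_iff.1 hgf x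
  simp only [Pi.add_apply, Pi.smul_apply, smul_eq_mul]
  rcases (hfS x hx).lt_or_gt with hfx | hfx
  · rw [sign_neg hfx, sign_neg (add_neg (mul_neg_of_pos_of_neg (neg_pos.2 hgp) hfx)
      (mul_neg_of_pos_of_neg hfp (hiff.2 hfx)))]
  · have hgx : 0 < g x := (not_lt.1 (mt hiff.1 hfx.not_gt)).lt_of_ne' (hgS x hx)
    rw [sign_pos hfx, sign_pos (add_pos (mul_pos (neg_pos.2 hgp) hfx) (mul_pos hfp hgx))]

lemma ncard_dichotomies_insert_of_submodule [DecidableEq X] {F : Submodule 𝕜 (X → 𝕜)}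
    {S : Finset X} {p : X} (hp : p ∉ S) (hF : ∃ f ∈ F, f p ≠ 0) :
    (dichotomies (F : Set (X → 𝕜)) (insert p S)).ncard =
      (dichotomies (F : Set (X → 𝕜)) S).ncard + (dichotomies {f ∈ F | f p = 0} S).ncard := by
  obtain ⟨g, hg, hgp⟩ : ∃ g ∈ F, 0 < g p := by
    obtain ⟨f, hf, hfp⟩ := hF
    exact ⟨f p • f, F.smul_mem _ hf, mul_self_pos.2 hfp⟩
  have hpos : dichotomies {f ∈ F | f p = 0} S ⊆ dichotomies {f ∈ F | 0 < f p} S := by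
    simpa [sign_pos hgp, sign_eq_one_iff] using dichotomies_zero_subset hg p S
  have hneg : dichotomies {f ∈ F | f p = 0} S ⊆ dichotomies {f ∈ F | f p < 0} S := by
    simpa [Left.sign_neg, sign_pos hgp, sign_eq_neg_one_iff] using
      dichotomies_zero_subset (F.neg_mem hg) p S
  have hinter : dichotomies {f ∈ F | 0 < f p} S ∩ dichotomies {f ∈ F | f p < 0} S =
      dichotomies {f ∈ F | f p = 0} S :=
    (dichotomies_pos_inter_neg_subset F p S).antisymm (Set.subset_inter hpos hneg)
  have hunion : dichotomies {f ∈ F | 0 < f p} S ∪ dichotomies {f ∈ F | f p < 0} S =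
      dichotomies (F : Set (X → 𝕜)) S := by
    refine (Set.union_subset (dichotomies_mono (Set.sep_subset _ _) S)
      (dichotomies_mono (Set.sep_subset _ _) S)).antisymm ?_
    rintro _ ⟨f, ⟨hf, hfS⟩, rfl⟩
    rcases lt_trichotomy (f p) 0 with hfp | hfp | hfp
    · exact .inr ⟨f, ⟨⟨hf, hfp⟩, hfS⟩, rfl⟩
    · exact .inl (hpos ⟨f, ⟨⟨hf, hfp⟩, hfS⟩, rfl⟩)
    · exact .inl ⟨f, ⟨⟨hf, hfp⟩, hfS⟩, rfl⟩
  rw [ncard_dichotomies_insert _ hp, ← hunion, ← hinter]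
  exact (Set.ncard_union_add_ncard_inter _ _ (finite_dichotomies _ _) (finite_dichotomies _ _)).symm

end Dichotomies

section FunctionCounting

variable {X 𝕜 : Type*} [Field 𝕜]

/-- The functions of a linear class `F` that vanish at `p`. -/
def vanishingAt (F : Submodule 𝕜 (X → 𝕜)) (p : X) : Submodule 𝕜 (X → 𝕜) :=
  F ⊓ LinearMap.ker (LinearMap.proj (R := 𝕜) (φ := fun _ : X => 𝕜) p)

lemma mem_vanishingAt {F : Submodule 𝕜 (X → 𝕜)} {p : X} {f : X → 𝕜} :
    f ∈ vanishingAt F p ↔ f ∈ F ∧ f p = 0 := by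
  simp [vanishingAt]

instance (F : Submodule 𝕜 (X → 𝕜)) [FiniteDimensional 𝕜 F] (p : X) :
    FiniteDimensional 𝕜 (vanishingAt F p) :=
  Submodule.finiteDimensional_inf_left _ _

lemma finrank_vanishingAt_add_one {F : Submodule 𝕜 (X → 𝕜)} [FiniteDimensional 𝕜 F] {p : X}
    (hF : ∃ f ∈ F, f p ≠ 0) : finrank 𝕜 (vanishingAt F p) + 1 = finrank 𝕜 F := by
  let evalAt : Dual 𝕜 F := LinearMap.proj p ∘ₗ F.subtype
  have heval : evalAt ≠ 0 := by
    obtain ⟨f, hf, hfp⟩ := hF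
    exact fun h => hfp (LinearMap.congr_fun h ⟨f, hf⟩)
  have hmap : vanishingAt F p = (LinearMap.ker evalAt).map F.subtype := by
    rw [vanishingAt, LinearMap.ker_comp, Submodule.map_comap_subtype]
  rw [hmap, Submodule.finrank_map_subtype_eq, Dual.finrank_ker_add_one_of_ne_zero heval]

/-- A finite set is in general position with respect to a linear class `F` of functions if the
evaluations of `F` at any `finrank F` or fewer of its points are linearly independent. This is
expressed dually: some function of `F` vanishes at all of these points but a given one. -/
def InGeneralPosition (F : Submodule 𝕜 (X → 𝕜)) (S : Finset X) : Prop :=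
  ∀ T ⊆ S, ∀ p ∈ S, p ∉ T → #T < finrank 𝕜 F → ∃ f ∈ F, (∀ x ∈ T, f x = 0) ∧ f p ≠ 0

namespace InGeneralPosition

variable {F : Submodule 𝕜 (X → 𝕜)} {S S' : Finset X} {p : X}

lemma mono (hS : InGeneralPosition F S) (h : S' ⊆ S) : InGeneralPosition F S' :=
  fun T hT p hp => hS T (hT.trans h) p (h hp)

lemma exists_ne_zero (hS : InGeneralPosition F S) (hp : p ∈ S) (hF : 0 < finrank 𝕜 F) :
    ∃ f ∈ F, f p ≠ 0 := by
  obtain ⟨f, hf, -, hfp⟩ := hS ∅ (empty_subset S) p hp (notMem_empty p) hF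
  exact ⟨f, hf, hfp⟩

lemma vanishingAt [DecidableEq X] [FiniteDimensional 𝕜 F]
    (hS : InGeneralPosition F (insert p S)) (hp : p ∉ S) (hF : ∃ f ∈ F, f p ≠ 0) :
    InGeneralPosition (vanishingAt F p) S := by
  intro T hT q hq hqT hcard
  have hqp : q ≠ p := fun h => hp (h ▸ hq)
  have hlt : #(insert p T) < finrank 𝕜 F := by
    have := finrank_vanishingAt_add_one hF
    have := card_insert_le p T
    omega
  obtain ⟨f, hf, hfT, hfq⟩ := hS (insert p T) (insert_subset_insert p hT) q (mem_insert_of_mem hq)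
    (by simp [hqp, hqT]) hlt
  rw [forall_mem_insert] at hfT
  exact ⟨f, mem_vanishingAt.2 ⟨hf, hfT.1⟩, hfT.2, hfq⟩

end InGeneralPosition

lemma sum_range_succ_succ_choose (n d : ℕ) :
    ∑ k ∈ range (d + 1), (n + 1).choose k =
      ∑ k ∈ range (d + 1), n.choose k + ∑ k ∈ range d, n.choose k := by
  rw [sum_range_succ', sum_range_succ' _ d]
  simp only [Nat.choose_succ_succ', Nat.choose_zero_right, sum_add_distrib]
  ring

variable [LinearOrder 𝕜] [IsStrictOrderedRing 𝕜]

/-- Cover's function counting theorem. -/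
theorem ncard_dichotomies {n : ℕ} {F : Submodule 𝕜 (X → 𝕜)} [FiniteDimensional 𝕜 F] {S : Finset X}
    (hcard : #S = n + 1) (hS : InGeneralPosition F S) :
    (dichotomies (F : Set (X → 𝕜)) S).ncard = 2 * ∑ k ∈ range (finrank 𝕜 F), n.choose k := by
  classical
  induction n generalizing F S with
  | zero =>
    obtain ⟨p, rfl⟩ := card_eq_one.1 hcard
    rcases hd : finrank 𝕜 F with _ | d
    · simp [Submodule.finrank_eq_zero.1 hd, dichotomies_singleton_zero]
    · have hF := hS.exists_ne_zero (mem_singleton_self p) (by omega)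
      rw [← insert_empty_eq, ncard_dichotomies_insert_of_submodule (notMem_empty p) hF,
        dichotomies_empty ⟨0, F.zero_mem⟩,
        dichotomies_empty (F := {f ∈ F | f p = 0}) ⟨0, F.zero_mem, rfl⟩, Set.ncard_singleton,
        sum_range_succ']
      simp
  | succ n ih =>
    obtain ⟨p, S, hp, rfl, hcardS⟩ := card_eq_succ.1 hcard
    rcases hd : finrank 𝕜 F with _ | d
    · simp [Submodule.finrank_eq_zero.1 hd, dichotomies_singleton_zero]
    · have hF := hS.exists_ne_zero (mem_insert_self p S) (by omega)
      have hvan : (vanishingAt F p : Set (X → 𝕜)) = {f ∈ F | f p = 0} :=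
        Set.ext fun _ => mem_vanishingAt
      have hd' : finrank 𝕜 (vanishingAt F p) = d := by
        have := finrank_vanishingAt_add_one hF
        omega
      rw [ncard_dichotomies_insert_of_submodule hp hF, ← hvan, ih hcardS (hS.vanishingAt hp hF),
        ih hcardS (hS.mono (subset_insert p S)), hd, hd', sum_range_succ_succ_choose, mul_add]

end FunctionCounting

section AffineFunctions

variable (𝕜 : Type*) {V : Type*} (P : Type*) [Field 𝕜] [AddCommGroup V] [Module 𝕜 V]
  [AddTorsor V P]

/-- The affine functions on `P`, as a linear class of functions. -/
def affineFunctions : Submodule 𝕜 (P → 𝕜) :=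
  LinearMap.range
    ({ toFun := (⇑), map_add' := AffineMap.coe_add, map_smul' := AffineMap.coe_smul } :
      (P →ᵃ[𝕜] 𝕜) →ₗ[𝕜] P → 𝕜)

variable {𝕜 P}

lemma mem_affineFunctions {f : P → 𝕜} : f ∈ affineFunctions 𝕜 P ↔ ∃ g : P →ᵃ[𝕜] 𝕜, ⇑g = f :=
  Iff.rfl

variable [FiniteDimensional 𝕜 V]

instance : FiniteDimensional 𝕜 (affineFunctions 𝕜 P) := by
  unfold affineFunctions
  infer_instance

lemma finrank_affineFunctions : finrank 𝕜 (affineFunctions 𝕜 P) = finrank 𝕜 V + 1 := by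
  rw [affineFunctions, LinearMap.finrank_range_of_inj AffineMap.coeFn_injective,
    AffineMap.finrank_eq (R := 𝕜) (V := V), finrank_self, mul_one]

lemma inGeneralPosition_affineFunctions {S : Finset P}
    (hS : ∀ T ⊆ S, #T ≤ finrank 𝕜 V + 1 → AffineIndependent 𝕜 ((↑) : T → P)) :
    InGeneralPosition (affineFunctions 𝕜 P) S := by
  classical
  intro T hT p hp hpT hcard
  rw [finrank_affineFunctions] at hcard
  have hind := hS (insert p T) (insert_subset hp hT) ((card_insert_le p T).trans hcard)
  obtain ⟨B, hTB, hB, hspan⟩ := exists_subset_affineIndependent_affineSpan_eq_top hind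
  -- The function separating `p` from `T` is its barycentric coordinate.
  let b : AffineBasis B 𝕜 P := ⟨(↑), hB, by rwa [Subtype.range_coe]⟩
  have hpB : p ∈ B := hTB (mem_insert_self p T)
  refine ⟨b.coord ⟨p, hpB⟩, mem_affineFunctions.2 ⟨_, rfl⟩, fun x hx => ?_, ?_⟩
  · have hxB : x ∈ B := hTB (mem_insert_of_mem hx)
    exact b.coord_apply_ne (j := ⟨x, hxB⟩) (by grind)
  · exact (b.coord_apply_eq ⟨p, hpB⟩).trans_ne one_ne_zero

end AffineFunctions

section Halfspaces

variable {E : Type*} [NormedAddCommGroup E] [InnerProductSpace ℝ E]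

lemma inner_add_const_mem_affineFunctions (v : E) (c : ℝ) :
    (fun x : E => ⟪x, v⟫ + c) ∈ affineFunctions ℝ E :=
  mem_affineFunctions.2 ⟨(innerₗ E v).toAffineMap + AffineMap.const ℝ E c, by
    ext
    simp [real_inner_comm]⟩

lemma exists_eq_inner_add_const [FiniteDimensional ℝ E] {f : E → ℝ}
    (hf : f ∈ affineFunctions ℝ E) : ∃ (v : E) (c : ℝ), ∀ x, f x = ⟪x, v⟫ + c := by
  obtain ⟨g, rfl⟩ := mem_affineFunctions.1 hf
  refine ⟨(InnerProductSpace.toDual ℝ E).symm g.linear.toContinuousLinearMap, g 0, fun x => ?_⟩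
  rw [real_inner_comm, InnerProductSpace.toDual_symm_apply]
  exact congr_fun g.decomp x

lemma filter_inner_le_mem_dichotomies (S : Finset E) (v : E) (c : ℝ) :
    {x ∈ S | ⟪x, v⟫ ≤ c} ∈ dichotomies (affineFunctions ℝ E : Set (E → ℝ)) S := by
  have hlt (x : ({x ∈ S | c < ⟪x, v⟫} : Finset E)) : c < ⟪(x : E), v⟫ := (mem_filter.1 x.2).2
  obtain ⟨ε, hε, hεlt⟩ := Pi.exists_forall_pos_add_lt hlt
  have hgap (x : E) (hx : x ∈ S) (hcx : c < ⟪x, v⟫) : c + ε < ⟪x, v⟫ :=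
    hεlt ⟨x, mem_filter.2 ⟨hx, hcx⟩⟩
  refine ⟨_, ⟨inner_add_const_mem_affineFunctions v (-(c + ε)), fun x hx => ?_⟩,
    filter_congr fun x hx => ?_⟩
  · rcases le_or_gt ⟪x, v⟫ c with hcx | hcx
    · exact (by linarith : ⟪x, v⟫ + -(c + ε) < 0).ne
    · exact (by linarith [hgap x hx hcx] : 0 < ⟪x, v⟫ + -(c + ε)).ne'
  · constructor
    · intro hneg
      by_contra! hcx
      linarith [hgap x hx hcx]
    · intro hcx
      linarith

lemma exists_filter_inner_le_eq [FiniteDimensional ℝ E] [Nontrivial E] {S T : Finset E}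
    (hT : T ∈ dichotomies (affineFunctions ℝ E : Set (E → ℝ)) S) :
    ∃ v : E, v ≠ 0 ∧ ∃ c : ℝ, T = {x ∈ S | ⟪x, v⟫ ≤ c} := by
  obtain ⟨f, ⟨hf, hfS⟩, rfl⟩ := hT
  obtain ⟨v, c, hfv⟩ := exists_eq_inner_add_const hf
  obtain ⟨w, hw, hsign⟩ : ∃ w ≠ 0, ∀ x ∈ S, sign (⟪x, w⟫ + c) = sign (f x) := by
    rcases eq_or_ne v 0 with rfl | hv
    · obtain ⟨u, hu⟩ := exists_ne (0 : E)
      obtain ⟨t, ht, hsign⟩ := exists_pos_forall_sign_add_mul_eq hfS fun x => ⟪x, u⟫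
      refine ⟨t • u, smul_ne_zero ht.ne' hu, fun x hx => ?_⟩
      rw [← hsign x hx, hfv, inner_smul_right, inner_zero_right, zero_add, add_comm]
    · exact ⟨v, hv, fun x _ => by rw [hfv]⟩
  refine ⟨w, hw, -c, filter_congr fun x hx => ?_⟩
  rw [← (hfS x hx).le_iff_lt, ← sign_nonpos_iff, ← hsign x hx, sign_nonpos_iff,
    le_neg_iff_add_nonpos_right]

end Halfspaces

section ConvexPosition

variable {𝕜 E : Type*} [Field 𝕜] [LinearOrder 𝕜] [IsStrictOrderedRing 𝕜] [AddCommGroup E]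
  [Module 𝕜 E]

lemma affineIndependent_of_convexIndependent_of_card_le_three {ι : Type*} [Finite ι] {p : ι → E}
    (hp : ConvexIndependent 𝕜 p) (hcard : Nat.card ι ≤ 3) : AffineIndependent 𝕜 p := by
  have hdisj (I : Set ι) (hI : I.ncard ≤ 1) :
      Disjoint (convexHull 𝕜 (p '' I)) (convexHull 𝕜 (p '' Iᶜ)) := by
    rcases (Set.ncard_le_one_iff_eq I.toFinite).1 hI with rfl | ⟨i, rfl⟩
    · simp
    · rw [Set.image_singleton, convexHull_singleton, Set.disjoint_singleton_left,
        hp.mem_convexHull_iff]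
      simp
  by_contra hdep
  obtain ⟨I, hI⟩ := Convex.radon_partition hdep
  have hle : I.ncard ≤ 1 ∨ Iᶜ.ncard ≤ 1 := by
    have := Set.ncard_add_ncard_compl I
    omega
  refine Set.not_disjoint_iff_nonempty_inter.2 hI ?_
  rcases hle with hle | hle
  · exact hdisj I hle
  · simpa using (hdisj Iᶜ hle).symm

lemma affineIndependent_of_subset_of_card_le_three {S T : Finset E}
    (hS : ∀ p ∈ S, p ∉ convexHull 𝕜 ((S : Set E) \ {p})) (hT : T ⊆ S) (hcard : #T ≤ 3) :
    AffineIndependent 𝕜 ((↑) : T → E) := by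
  have hconv := convexIndependent_set_iff_notMem_convexHull_sdiff.2 hS
  exact affineIndependent_of_convexIndependent_of_card_le_three (hconv.mono (coe_subset.2 hT))
    (by simpa using hcard)

end ConvexPosition

lemma two_mul_sum_range_three_choose (n : ℕ) :
    2 * ∑ k ∈ range 3, n.choose k = (n + 1) ^ 2 - (n + 1) + 2 := by
  have hsum : 2 * ∑ k ∈ range 3, n.choose k = n ^ 2 + n + 2 := by
    induction n with
    | zero => rfl
    | succ n ih =>
      rw [sum_range_succ_succ_choose, mul_add, ih, sum_range_succ, sum_range_one]
      simp only [Nat.choose_zero_right, Nat.choose_one_right]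
      ring
  rw [hsum, show (n + 1) ^ 2 = n ^ 2 + n + (n + 1) by ring, Nat.add_sub_cancel]

theorem card_halfspace_subsets_convex_position_general {E : Type*} [NormedAddCommGroup E]
    [InnerProductSpace ℝ E] [FiniteDimensional ℝ E] [Nontrivial E] {n : ℕ} (S : Finset E)
    (hcard : #S = n + 1)
    (hS : ∀ T ⊆ S, #T ≤ finrank ℝ E + 1 → AffineIndependent ℝ ((↑) : T → E)) :
    {T : Finset E | ∃ v : E, v ≠ 0 ∧ ∃ c : ℝ, T = S.filter (fun x => ⟪x, v⟫ ≤ c)}.ncard =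
      2 * ∑ k ∈ range (finrank ℝ E + 1), n.choose k := by
  rw [← finrank_affineFunctions (𝕜 := ℝ) (P := E),
    ← ncard_dichotomies hcard (inGeneralPosition_affineFunctions hS)]
  congr 1 with T
  constructor
  · rintro ⟨v, -, c, rfl⟩
    exact filter_inner_le_mem_dichotomies S v c
  · exact exists_filter_inner_le_eq

/-- For a set `S` of `n ≥ 1` points of `ℝ²` in strictly convex position, the number of
distinct subsets of `S` cut off by closed halfspaces is exactly `n² − n + 2`. -/
theorem card_halfspace_subsets_convex_position {n : ℕ} (hn : 1 ≤ n)
    (S : Finset (EuclideanSpace ℝ (Fin 2))) (hcard : S.card = n)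
    (hconv : ∀ p ∈ S, p ∉ convexHull ℝ ((S : Set (EuclideanSpace ℝ (Fin 2))) \ {p})) :
    {T : Finset (EuclideanSpace ℝ (Fin 2)) | ∃ v : EuclideanSpace ℝ (Fin 2), v ≠ 0 ∧
      ∃ c : ℝ, T = S.filter (fun x => ⟪x, v⟫ ≤ c)}.ncard = n ^ 2 - n + 2 := by
  obtain ⟨m, rfl⟩ := Nat.exists_eq_add_of_le' hn
  rw [card_halfspace_subsets_convex_position_general S hcard fun T hT hT3 =>
      affineIndependent_of_subset_of_card_le_three hconv hT (by simpa using hT3),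
    finrank_euclideanSpace_fin, two_mul_sum_range_three_choose]
end
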